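/- Let n ≥ 1 and s ∈ (0,1). Let u : ℝⁿ → ℝ be a Schwartz function and let w be its normalized Caffarelli–Silvestre extension w(x,y) = (1/d_{n,s}) ∫_{ℝⁿ} y^{2s} u(ξ)(|x-ξ|²+y²)^{-(n+2s)/2} dξ, where d_{n,s} = ∫_{ℝⁿ}(|z|²+1)^{-(n+2s)/2} dz. Then for every function v : ℝⁿ × [0,∞) → ℝ that is continuously differentiable on ℝⁿ × (0,∞), continuous up to y = 0 with v(x,0) = u(x) for all x, and has finite energy ℰ_s(v) := ∫₀^∞ ∫_{ℝⁿ} y^{1-2s} |∇v(x,y)|² dx dy < ∞, one has ℰ_s(w) ≤ ℰ_s(v). -/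

import Mathlib

open MeasureTheory Real Filter
open scoped ENNReal Topology

/-!
The extension `w` solves the degenerate elliptic equation `div (y^{1-2s} ∇w) = 0`. For a competitor
`v` put `φ = v - w`; then `|∇v|² ≥ |∇w|² + 2 ⟪∇w, ∇φ⟫`, and by the divergence theorem the weighted
integral of `⟪∇w, ∇φ⟫` over a slab `a < y ≤ b` is the difference between the heights `b` and `a` of
`∫ y^{1-2s} ∂_y w φ dx`. These boundary terms vanish as `a → 0` and `b → ∞`: the flux
`y^{1-2s} ∂_y w` is bounded in `L²`, and `O(y^{-2s})` at infinity, while finite energy and zero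
trace give `‖φ(·, y)‖₂ = O(y^s)`.
-/

open Module (finrank)
open scoped Gradient InnerProductSpace Laplacian LineDeriv NNReal SchwartzMap

section Kernel

/-- The kernel `(|z|² + y²)^(-r)`. With `2r = n + 2s` it is, up to the factor `y^{2s}` and
normalization, the Poisson kernel of the operator `v ↦ div (y^{1-2s} ∇v)` on the half-space. -/
noncomputable def csKernel {E : Type*} [Norm E] (r y : ℝ) (z : E) : ℝ := (‖z‖ ^ 2 + y ^ 2) ^ (-r)

section Norm

variable {E : Type*} [NormedAddCommGroup E] {r y : ℝ}

theorem csKernel_pos (z : E) (hy : 0 < y) : 0 < csKernel r y z := by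
  unfold csKernel; positivity

@[fun_prop]
theorem continuous_csKernel (hy : 0 < y) : Continuous (csKernel r y : E → ℝ) :=
  Continuous.rpow_const (by fun_prop) fun z => Or.inl (by positivity)

theorem csKernel_le_csKernel_zero (z : E) {t : ℝ} (hr : 0 ≤ r) (hy : 0 < y) (hyt : y ≤ t) :
    csKernel r t z ≤ csKernel r y (0 : E) := by
  unfold csKernel
  refine Real.rpow_le_rpow_of_nonpos (by simpa using pow_pos hy 2) ?_ (by linarith)
  have : y ^ 2 ≤ t ^ 2 := by gcongr
  simpa using this.trans (le_add_of_nonneg_left (sq_nonneg ‖z‖))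

theorem norm_csKernel_le_csKernel_zero (z : E) (hr : 0 ≤ r) (hy : 0 < y) :
    ‖csKernel r y z‖ ≤ csKernel r y (0 : E) :=
  (Real.norm_of_nonneg (csKernel_pos z hy).le).trans_le (csKernel_le_csKernel_zero z hr hy le_rfl)

theorem csKernel_eq_mul_csKernel_add_one (z : E) (hy : 0 < y) :
    csKernel r y z = (‖z‖ ^ 2 + y ^ 2) * csKernel (r + 1) y z := by
  have h : 0 < ‖z‖ ^ 2 + y ^ 2 := by positivity
  rw [csKernel, csKernel, neg_add', Real.rpow_sub_one h.ne', mul_div_cancel₀ _ h.ne']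

theorem hasDerivAt_csKernel (z : E) (hy : 0 < y) :
    HasDerivAt (fun t => csKernel r t z) (-2 * r * y * csKernel (r + 1) y z) y := by
  have h : HasDerivAt (fun t : ℝ => ‖z‖ ^ 2 + t ^ 2) (2 * y) y := by
    simpa using (hasDerivAt_pow 2 y).const_add (‖z‖ ^ 2)
  refine (h.rpow_const (p := -r) (Or.inl (by positivity))).congr_deriv ?_
  rw [csKernel, neg_add']
  ring

theorem csKernel_smul [NormedSpace ℝ E] (z : E) (hy : 0 < y) :
    csKernel r y (y • z) = y ^ (-(2 * r)) * csKernel r 1 z := by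
  have h : ‖y • z‖ ^ 2 + y ^ 2 = y ^ (2 : ℝ) * (‖z‖ ^ 2 + 1 ^ 2) := by
    rw [norm_smul, Real.norm_of_nonneg hy.le, Real.rpow_two]; ring
  rw [csKernel, csKernel, h, Real.mul_rpow (by positivity) (by positivity), ← Real.rpow_mul hy.le,
    mul_neg]

end Norm

section Inner

variable {E : Type*} [NormedAddCommGroup E] [InnerProductSpace ℝ E] {r y : ℝ}

theorem hasLineDerivAt_csKernel (z e : E) (hy : 0 < y) :
    HasLineDerivAt ℝ (csKernel r y) (-2 * r * (⟪z, e⟫_ℝ * csKernel (r + 1) y z)) z e := by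
  have h : HasFDerivAt (fun z : E => ‖z‖ ^ 2 + y ^ 2) (2 • innerSL ℝ z) z :=
    (hasStrictFDerivAt_norm_sq z).hasFDerivAt.add_const _
  have hpos : 0 < ‖z‖ ^ 2 + y ^ 2 := by positivity
  refine HasDerivAt.congr_deriv
    ((h.rpow_const (p := -r) (Or.inl hpos.ne')).hasLineDerivAt e) ?_
  simp only [csKernel, neg_add', smul_apply, innerSL_apply_apply, nsmul_eq_mul, smul_eq_mul,
    Nat.cast_ofNat]
  ring

theorem hasLineDerivAt_inner_mul_csKernel (z e : E) (hy : 0 < y) :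
    HasLineDerivAt ℝ (fun z => ⟪z, e⟫_ℝ * csKernel r y z)
      (‖e‖ ^ 2 * csKernel r y z - 2 * r * (⟪z, e⟫_ℝ ^ 2 * csKernel (r + 1) y z)) z e := by
  have h : HasLineDerivAt ℝ (fun z : E => ⟪z, e⟫_ℝ) (‖e‖ ^ 2) z e := by
    simpa [real_inner_comm] using ((innerSL ℝ e).hasFDerivAt (x := z)).hasLineDerivAt e
  refine (HasDerivAt.mul h (hasLineDerivAt_csKernel z e hy)).congr_deriv ?_
  simp only [zero_smul, add_zero]
  ring

theorem norm_inner_mul_csKernel_le (z e : E) (hr : 0 ≤ r) (hy : 0 < y) :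
    ‖⟪z, e⟫_ℝ * csKernel (r + 1) y z‖ ≤ ‖e‖ / y * csKernel r y (0 : E) := by
  have hK := csKernel_pos (r := r + 1) z hy
  have h : |⟪z, e⟫_ℝ| ≤ ‖e‖ / y * (‖z‖ ^ 2 + y ^ 2) := by
    refine (abs_real_inner_le_norm z e).trans ?_
    rw [div_mul_eq_mul_div, le_div_iff₀ hy]
    nlinarith [norm_nonneg e, sq_nonneg (‖z‖ - y), mul_nonneg (norm_nonneg z) hy.le]
  calc ‖⟪z, e⟫_ℝ * csKernel (r + 1) y z‖ = |⟪z, e⟫_ℝ| * csKernel (r + 1) y z := by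
        rw [norm_mul, Real.norm_eq_abs, Real.norm_of_nonneg hK.le]
    _ ≤ ‖e‖ / y * (‖z‖ ^ 2 + y ^ 2) * csKernel (r + 1) y z := by gcongr
    _ = ‖e‖ / y * csKernel r y z := by
        rw [csKernel_eq_mul_csKernel_add_one (r := r) z hy, mul_assoc]
    _ ≤ ‖e‖ / y * csKernel r y (0 : E) := by
        gcongr; exact csKernel_le_csKernel_zero z hr hy le_rfl

theorem norm_inner_sq_mul_csKernel_le (z e : E) (hr : 0 ≤ r) (hy : 0 < y) :
    ‖⟪z, e⟫_ℝ ^ 2 * csKernel (r + 1) y z‖ ≤ ‖e‖ ^ 2 * csKernel r y (0 : E) := by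
  have hK := csKernel_pos (r := r + 1) z hy
  have h : ⟪z, e⟫_ℝ ^ 2 ≤ ‖e‖ ^ 2 * (‖z‖ ^ 2 + y ^ 2) := by
    have := pow_le_pow_left₀ (abs_nonneg _) (abs_real_inner_le_norm z e) 2
    rw [sq_abs] at this
    nlinarith [mul_nonneg (sq_nonneg ‖e‖) (sq_nonneg y)]
  calc ‖⟪z, e⟫_ℝ ^ 2 * csKernel (r + 1) y z‖ = ⟪z, e⟫_ℝ ^ 2 * csKernel (r + 1) y z :=
        Real.norm_of_nonneg (by positivity)
    _ ≤ ‖e‖ ^ 2 * (‖z‖ ^ 2 + y ^ 2) * csKernel (r + 1) y z := by gcongr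
    _ = ‖e‖ ^ 2 * csKernel r y z := by
        rw [csKernel_eq_mul_csKernel_add_one (r := r) z hy, mul_assoc]
    _ ≤ ‖e‖ ^ 2 * csKernel r y (0 : E) := by
        gcongr; exact csKernel_le_csKernel_zero z hr hy le_rfl

variable [FiniteDimensional ℝ E] [MeasurableSpace E] [BorelSpace E]

theorem integrable_csKernel (hr : finrank ℝ E < 2 * r) (hy : 0 < y) :
    Integrable (csKernel r y : E → ℝ) := by
  have h := (integrable_rpow_neg_one_add_norm_sq (μ := (volume : Measure E)) hr).comp_smul
    (inv_ne_zero hy.ne')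
  refine (h.const_mul (y ^ (-(2 * r)))).congr (.of_forall fun z => ?_)
  have hz := csKernel_smul (r := r) (y⁻¹ • z) hy
  rw [smul_inv_smul₀ hy.ne'] at hz
  rw [hz, csKernel, one_pow, add_comm, neg_div, mul_div_cancel_left₀ r two_ne_zero]

theorem integral_csKernel_pos (hr : finrank ℝ E < 2 * r) (hy : 0 < y) :
    0 < ∫ z : E, csKernel r y z :=
  integral_pos_of_integrable_nonneg_nonzero (continuous_csKernel hy) (integrable_csKernel hr hy)
    (fun z => (csKernel_pos z hy).le) (csKernel_pos 0 hy).ne'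

variable {F : Type*} [NormedAddCommGroup F] [NormedSpace ℝ F]

theorem rpow_smul_integral_csKernel_smul (hy : 0 < y) (g : E → F) :
    y ^ (2 * r - finrank ℝ E) • ∫ z, csKernel r y z • g z = ∫ z, csKernel r 1 z • g (y • z) := by
  have h := Measure.integral_comp_smul volume (fun z : E => csKernel r y z • g z) y
  simp_rw [csKernel_smul _ hy, mul_smul, integral_smul] at h
  rw [abs_of_pos (by positivity), ← Real.rpow_natCast, ← Real.rpow_neg hy.le] at h
  rw [sub_eq_add_neg, Real.rpow_add hy, mul_smul, ← h, smul_smul, ← Real.rpow_add hy,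
    add_neg_cancel, Real.rpow_zero, one_smul]

theorem integral_csKernel (hy : 0 < y) :
    ∫ z : E, csKernel r y z = y ^ (finrank ℝ E - 2 * r) * ∫ z : E, csKernel r 1 z := by
  have h := rpow_smul_integral_csKernel_smul (r := r) hy fun _ : E => (1 : ℝ)
  simp only [smul_eq_mul, mul_one] at h
  rw [← h, ← mul_assoc, ← Real.rpow_add hy, sub_add_sub_cancel, sub_self, Real.rpow_zero, one_mul]

theorem sq_mul_integral_csKernel_add_one_le (hr : finrank ℝ E < 2 * r) (hy : 0 < y) :
    y ^ 2 * ∫ z : E, csKernel (r + 1) y z ≤ ∫ z : E, csKernel r y z := by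
  rw [← integral_const_mul]
  refine integral_mono ((integrable_csKernel (by linarith) hy).const_mul _)
    (integrable_csKernel hr hy) fun z => ?_
  rw [csKernel_eq_mul_csKernel_add_one (r := r) z hy]
  have := csKernel_pos (r := r + 1) z hy
  gcongr
  exact le_add_of_nonneg_left (sq_nonneg _)

end Inner

end Kernel

section Potential

variable {E F : Type*} [NormedAddCommGroup E] [InnerProductSpace ℝ E] [FiniteDimensional ℝ E]
  [MeasurableSpace E] [BorelSpace E] [NormedAddCommGroup F] [NormedSpace ℝ F] {r y : ℝ}

/-- The convolution of `f` with the kernel `csKernel r y`, as a function of the point `x` and the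
height `y`. -/
noncomputable def csPotential (r : ℝ) (f : E → F) (x : E) (y : ℝ) : F :=
  ∫ ξ, csKernel r y (x - ξ) • f ξ

theorem csPotential_eq_integral_comp_sub (r : ℝ) (f : E → F) (x : E) (y : ℝ) :
    csPotential r f x y = ∫ z, csKernel r y z • f (x - z) := by
  rw [← integral_sub_left_eq_self _ volume x]
  simp only [csPotential, sub_sub_cancel]

theorem integrable_csKernel_smul {f : E → F} (hf : Integrable f) (hr : 0 ≤ r) (hy : 0 < y) (x : E) :
    Integrable fun ξ => csKernel r y (x - ξ) • f ξ :=
  hf.bdd_smul _ ((continuous_csKernel hy).comp (continuous_sub_left x)).aestronglyMeasurable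
    (.of_forall fun _ => norm_csKernel_le_csKernel_zero _ hr hy)

theorem stronglyMeasurable_csPotential (r : ℝ) {f : E → F} (hf : StronglyMeasurable f) :
    StronglyMeasurable fun p : E × ℝ => csPotential r f p.1 p.2 := by
  refine StronglyMeasurable.integral_prod_right
    (f := fun (p : E × ℝ) ξ => csKernel r p.2 (p.1 - ξ) • f ξ) ?_
  refine StronglyMeasurable.smul (Measurable.stronglyMeasurable ?_)
    (hf.comp_measurable measurable_snd)
  unfold csKernel
  fun_prop

theorem hasDerivAt_csPotential {f : E → F} (hf : Integrable f) (hr : 0 ≤ r) (hy : 0 < y) (x : E) :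
    HasDerivAt (csPotential r f x) ((-2 * r * y) • csPotential (r + 1) f x y) y := by
  have key := hasDerivAt_integral_of_dominated_loc_of_deriv_le (μ := (volume : Measure E))
    (F := fun t ξ => csKernel r t (x - ξ) • f ξ)
    (F' := fun t ξ => (-2 * r * t * csKernel (r + 1) t (x - ξ)) • f ξ)
    (bound := fun ξ => 2 * r * (2 * y) * csKernel (r + 1) (y / 2) (0 : E) * ‖f ξ‖)
    (s := Set.Ioo (y / 2) (2 * y)) (x₀ := y)
    (Ioo_mem_nhds (by linarith) (by linarith)) ?meas (integrable_csKernel_smul hf hr hy x) ?meas'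
    ?le (hf.norm.const_mul _) (.of_forall fun ξ t ht =>
      (hasDerivAt_csKernel (x - ξ) ((half_pos hy).trans ht.1)).smul_const (f ξ))
  case meas =>
    filter_upwards [Ioi_mem_nhds hy] with t ht
    exact (integrable_csKernel_smul hf hr ht x).1
  case meas' =>
    simp_rw [mul_smul _ (csKernel _ _ _)]
    exact (integrable_csKernel_smul hf (by positivity) hy x).1.const_smul _
  case le =>
    refine .of_forall fun ξ t ht => ?_
    have hK := csKernel_le_csKernel_zero (r := r + 1) (x - ξ) (by positivity) (half_pos hy) ht.1.le
    have ht₀ : 0 < t := (half_pos hy).trans ht.1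
    have hK₀ := csKernel_pos (r := r + 1) (x - ξ) ht₀
    rw [norm_smul, neg_mul, neg_mul, neg_mul, norm_neg, Real.norm_of_nonneg (by positivity)]
    gcongr
    exact ht.2.le
  refine key.2.congr_deriv ?_
  simp_rw [mul_smul _ (csKernel _ _ _), integral_smul]
  rfl

section Schwartz

theorem integral_comp_sub_smul_lineDeriv {K K' : E → ℝ} {e : E} {C C' : ℝ} (hK : Continuous K)
    (hK' : Continuous K') (hC : ∀ z, ‖K z‖ ≤ C) (hC' : ∀ z, ‖K' z‖ ≤ C')
    (h : ∀ z, HasLineDerivAt ℝ K (K' z) z e) (f : 𝓢(E, F)) (x : E) :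
    ∫ ξ, K (x - ξ) • ∂_{e} f ξ = ∫ ξ, K' (x - ξ) • f ξ := by
  have hint : ∀ {k : E → ℝ} {c : ℝ} (_ : Continuous k) (_ : ∀ z, ‖k z‖ ≤ c) (g : 𝓢(E, F)),
      Integrable fun ξ => k (x - ξ) • g ξ := fun hk hc g =>
    g.integrable.bdd_smul _ (hk.comp (continuous_sub_left x)).aestronglyMeasurable
      (.of_forall fun _ => hc _)
  have hK_sub : ∀ ξ, HasLineDerivAt ℝ (fun ξ => K (x - ξ)) (-K' (x - ξ)) ξ e := fun ξ => by
    have h₀ : HasDerivAt (fun t : ℝ => K (x - ξ + t • e)) (K' (x - ξ)) (0 - 0) := by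
      simpa [HasLineDerivAt] using h (x - ξ)
    refine (h₀.comp_const_sub 0 0).congr_of_eventuallyEq (.of_forall fun t => ?_)
    simp only [zero_sub, neg_smul, ← sub_eq_add_neg, sub_sub]
  have key := integral_bilinear_hasLineDerivAt_right_eq_neg_left_of_integrable
    (μ := (volume : Measure E)) (B := ContinuousLinearMap.lsmul ℝ ℝ) (v := e)
    (f := fun ξ => K (x - ξ)) (f' := fun ξ => -K' (x - ξ)) (g := f) (g' := fun ξ => ∂_{e} f ξ)
    (by simpa using (hint hK' hC' f).neg) (hint hK hC (∂_{e} f)) (hint hK hC f)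
    (fun ξ _ => hK_sub ξ) (fun ξ _ => (f.hasFDerivAt ξ).hasLineDerivAt e)
  simpa [integral_neg] using key

theorem csPotential_lineDeriv (f : 𝓢(E, F)) (e : E) (hr : 0 ≤ r) (hy : 0 < y) (x : E) :
    csPotential r (∂_{e} f : 𝓢(E, F)) x y =
      (-2 * r) • ∫ ξ, (⟪x - ξ, e⟫_ℝ * csKernel (r + 1) y (x - ξ)) • f ξ := by
  rw [csPotential, integral_comp_sub_smul_lineDeriv
    (K' := fun z => -2 * r * (⟪z, e⟫_ℝ * csKernel (r + 1) y z))
    (C' := ‖-2 * r‖ * (‖e‖ / y * csKernel r y (0 : E)))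
    (continuous_csKernel hy) (by fun_prop (disch := exact hy))
    (norm_csKernel_le_csKernel_zero · hr hy) (fun z => ?_) (hasLineDerivAt_csKernel · e hy)]
  · simp_rw [mul_smul (-2 * r), integral_smul]
  · rw [norm_mul]
    gcongr
    exact norm_inner_mul_csKernel_le z e hr hy

theorem integrable_inner_sq_mul_csKernel_smul {f : E → F} (hf : Integrable f) (e : E) (hr : 0 ≤ r)
    (hy : 0 < y) (x : E) :
    Integrable fun ξ => (⟪x - ξ, e⟫_ℝ ^ 2 * csKernel (r + 1) y (x - ξ)) • f ξ := by
  refine hf.bdd_smul _ (Continuous.aestronglyMeasurable ?_)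
    (.of_forall fun ξ => norm_inner_sq_mul_csKernel_le (x - ξ) e hr hy)
  fun_prop (disch := exact hy)

theorem csPotential_lineDeriv_lineDeriv (f : 𝓢(E, F)) (e : E) (hr : 0 ≤ r) (hy : 0 < y) (x : E) :
    csPotential r (∂_{e} (∂_{e} f) : 𝓢(E, F)) x y =
      (-2 * r * ‖e‖ ^ 2) • csPotential (r + 1) f x y + (4 * r * (r + 1)) •
        ∫ ξ, (⟪x - ξ, e⟫_ℝ ^ 2 * csKernel (r + 2) y (x - ξ)) • f ξ := by
  have h₁ := integrable_csKernel_smul f.integrable (by positivity : 0 ≤ r + 1) hy x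
  have h₂ := integrable_inner_sq_mul_csKernel_smul f.integrable e (by positivity : 0 ≤ r + 1) hy x
  rw [csPotential_lineDeriv _ e hr hy, integral_comp_sub_smul_lineDeriv
    (K := fun z => ⟪z, e⟫_ℝ * csKernel (r + 1) y z)
    (C' := ‖e‖ ^ 2 * csKernel (r + 1) y (0 : E)
      + ‖2 * (r + 1)‖ * (‖e‖ ^ 2 * csKernel (r + 1) y (0 : E)))
    (by fun_prop (disch := exact hy)) (by fun_prop (disch := exact hy))
    (norm_inner_mul_csKernel_le · e hr hy) (fun z => ?bound)
    (hasLineDerivAt_inner_mul_csKernel · e hy)]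
  case bound =>
    refine (norm_sub_le _ _).trans ?_
    rw [norm_mul, norm_mul (2 * (r + 1)), Real.norm_of_nonneg (sq_nonneg ‖e‖)]
    gcongr
    · exact norm_csKernel_le_csKernel_zero z (by positivity) hy
    · exact norm_inner_sq_mul_csKernel_le z e (by positivity) hy
  simp_rw [sub_smul, mul_smul (‖e‖ ^ 2), mul_smul (2 * (r + 1))]
  rw [integral_sub (h₁.fun_smul _) (h₂.fun_smul _), integral_smul, integral_smul, csPotential,
    add_assoc r 1 1, one_add_one_eq_two]
  module

theorem csPotential_laplacian_eq_sum {ι : Type*} [Fintype ι] (b : OrthonormalBasis ι ℝ E)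
    (f : 𝓢(E, F)) (hr : 0 ≤ r) (hy : 0 < y) (x : E) :
    csPotential r (Δ f : 𝓢(E, F)) x y =
      ∑ i, csPotential r (∂_{b i} (∂_{b i} f) : 𝓢(E, F)) x y := by
  simp only [csPotential]
  rw [← integral_finsetSum _ fun i _ =>
    integrable_csKernel_smul (SchwartzMap.integrable _) hr hy x]
  simp only [SchwartzMap.laplacian_eq_sum b, sum_apply, Finset.smul_sum]

theorem csPotential_laplacian (f : 𝓢(E, F)) (hr : 0 ≤ r) (hy : 0 < y) (x : E) :
    csPotential r (Δ f : 𝓢(E, F)) x y =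
      (2 * r * (2 * (r + 1) - finrank ℝ E)) • csPotential (r + 1) f x y
        - (4 * r * (r + 1) * y ^ 2) • csPotential (r + 2) f x y := by
  let b := stdOrthonormalBasis ℝ E
  have hint := fun i => integrable_inner_sq_mul_csKernel_smul f.integrable (b i)
    (by positivity : 0 ≤ r + 1) hy x
  rw [add_assoc r 1 1, one_add_one_eq_two] at hint
  have hsum : ∑ i, ∫ ξ, (⟪x - ξ, b i⟫_ℝ ^ 2 * csKernel (r + 2) y (x - ξ)) • f ξ =
      csPotential (r + 1) f x y - y ^ 2 • csPotential (r + 2) f x y := by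
    rw [← integral_finsetSum _ fun i _ => hint i, csPotential, csPotential, ← integral_smul,
      ← integral_sub (integrable_csKernel_smul f.integrable (by positivity) hy x)
        ((integrable_csKernel_smul f.integrable (by positivity) hy x).fun_smul _)]
    congr! with ξ
    rw [← Finset.sum_smul, ← Finset.sum_mul, b.sum_sq_inner_left,
      csKernel_eq_mul_csKernel_add_one (r := r + 1) (x - ξ) hy, add_assoc r 1 1, one_add_one_eq_two]
    module
  simp_rw [csPotential_laplacian_eq_sum b f hr hy x, csPotential_lineDeriv_lineDeriv f _ hr hy x,
    b.norm_eq_one, Finset.sum_add_distrib, ← Finset.smul_sum, hsum, Finset.sum_const,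
    Finset.card_univ, Fintype.card_fin]
  module

theorem hasFDerivAt_csPotential (f : 𝓢(E, F)) (hr : finrank ℝ E < 2 * r) (hy : 0 < y) (x : E) :
    HasFDerivAt (csPotential r f · y) (csPotential r (fderiv ℝ f) x y) x := by
  have hK := integrable_csKernel (E := E) hr hy
  let f' := SchwartzMap.fderivCLM ℝ E F f
  simp_rw [csPotential_eq_integral_comp_sub]
  refine hasFDerivAt_integral_of_dominated_of_fderiv_le (s := Set.univ)
    (F' := fun x z => csKernel r y z • f' (x - z))
    (bound := fun z => csKernel r y z * SchwartzMap.seminorm ℝ 0 0 f') univ_mem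
    (.of_forall fun x => ?_) ?_ ?_ (.of_forall fun z x _ => ?_) (hK.mul_const _)
    (.of_forall fun z x _ => ?_)
  · exact hK.1.smul (f.continuous.comp (continuous_sub_left x)).aestronglyMeasurable
  · exact hK.smul_bdd (SchwartzMap.seminorm ℝ 0 0 f)
      (f.continuous.comp (continuous_sub_left x)).aestronglyMeasurable
      (.of_forall fun z => f.norm_le_seminorm ℝ _)
  · exact hK.1.smul (f'.continuous.comp (continuous_sub_left x)).aestronglyMeasurable
  · rw [norm_smul, Real.norm_of_nonneg (csKernel_pos z hy).le]
    gcongr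
    · exact (csKernel_pos z hy).le
    · exact f'.norm_le_seminorm ℝ _
  · exact ((hasFDerivAt_comp_sub z).2 (f.hasFDerivAt (x - z))).const_smul _

theorem tendsto_rpow_smul_csPotential [CompleteSpace F] (f : 𝓢(E, F))
    (hr : finrank ℝ E < 2 * r) (x : E) :
    Tendsto (fun y => y ^ (2 * r - finrank ℝ E) • csPotential r f x y) (𝓝[>] 0)
      (𝓝 ((∫ z : E, csKernel r 1 z) • f x)) := by
  have hK : Integrable (csKernel r 1 : E → ℝ) := integrable_csKernel hr one_pos
  have key : Tendsto (fun y : ℝ => ∫ z : E, csKernel r 1 z • f (x - y • z)) (𝓝[>] 0)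
      (𝓝 (∫ z : E, csKernel r 1 z • f x)) := by
    refine tendsto_integral_filter_of_dominated_convergence
      (fun z => csKernel r 1 z * SchwartzMap.seminorm ℝ 0 0 f)
      (.of_forall fun y => hK.1.smul (f.continuous.comp (by fun_prop)).aestronglyMeasurable)
      (.of_forall fun y => .of_forall fun z => ?_) (hK.mul_const _) (.of_forall fun z => ?_)
    · rw [norm_smul, Real.norm_of_nonneg (csKernel_pos z one_pos).le]
      gcongr
      · exact (csKernel_pos z one_pos).le
      · exact f.norm_le_seminorm ℝ _
    · have : Continuous fun y : ℝ => csKernel r 1 z • f (x - y • z) :=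
        continuous_const.smul (f.continuous.comp (by fun_prop))
      simpa using (this.tendsto 0).mono_left nhdsWithin_le_nhds
  rw [integral_smul_const] at key
  refine key.congr' ?_
  filter_upwards [self_mem_nhdsWithin] with y hy
  rw [csPotential_eq_integral_comp_sub, rpow_smul_integral_csKernel_smul hy]

end Schwartz

end Potential

section SquareIntegrals

theorem eLpNorm_two_sq {α ε : Type*} [MeasurableSpace α] [ENorm ε] (f : α → ε) (μ : Measure α) :
    eLpNorm f 2 μ ^ 2 = ∫⁻ x, ‖f x‖ₑ ^ 2 ∂μ := by
  have h := eLpNorm_nnreal_pow_eq_lintegral (μ := μ) (f := f) (two_ne_zero (α := ℝ≥0))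
  simpa only [ENNReal.coe_ofNat, NNReal.coe_ofNat, ENNReal.rpow_two] using h

theorem sq_lintegral_mul_le {α : Type*} [MeasurableSpace α] (μ : Measure α) {k f : α → ℝ≥0∞}
    (hk : AEMeasurable k μ) (hf : AEMeasurable f μ) :
    (∫⁻ x, k x * f x ∂μ) ^ 2 ≤ (∫⁻ x, k x ∂μ) * ∫⁻ x, k x * f x ^ 2 ∂μ := by
  have hsq : ∀ c : ℝ≥0∞, (c ^ (1 / 2 : ℝ)) ^ 2 = c := fun c => by
    rw [← ENNReal.rpow_natCast, ← ENNReal.rpow_mul]; norm_num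
  have h := pow_le_pow_left' (ENNReal.lintegral_mul_le_Lp_mul_Lq μ .two_two
    (hk.pow_const (1 / 2 : ℝ)) ((hk.pow_const (1 / 2 : ℝ)).mul hf)) 2
  simpa only [Pi.mul_apply, mul_pow, hsq, ENNReal.rpow_two, ← mul_assoc, ← sq] using h

theorem lintegral_sq_lintegral_sub_mul_le {G : Type*} [AddCommGroup G] [MeasurableSpace G]
    [MeasurableAdd₂ G] [MeasurableNeg G] (μ : Measure G) [SFinite μ] [μ.IsAddLeftInvariant]
    [μ.IsNegInvariant] {k f : G → ℝ≥0∞} (hk : Measurable k) (hf : Measurable f) :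
    ∫⁻ x, (∫⁻ ξ, k (x - ξ) * f ξ ∂μ) ^ 2 ∂μ ≤ (∫⁻ z, k z ∂μ) ^ 2 * ∫⁻ x, f x ^ 2 ∂μ := by
  have hk₂ : Measurable fun p : G × G => k (p.1 - p.2) := hk.comp measurable_sub
  have hk_sub : ∀ x, Measurable fun ξ => k (x - ξ) := fun x => hk₂.comp measurable_prodMk_left
  have hk_sub' : ∀ ξ, Measurable fun x => k (x - ξ) := fun ξ => hk₂.comp measurable_prodMk_right
  have hkf : Measurable fun p : G × G => k (p.1 - p.2) * f p.2 ^ 2 := by fun_prop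
  calc ∫⁻ x, (∫⁻ ξ, k (x - ξ) * f ξ ∂μ) ^ 2 ∂μ
      ≤ ∫⁻ x, (∫⁻ z, k z ∂μ) * ∫⁻ ξ, k (x - ξ) * f ξ ^ 2 ∂μ ∂μ := by
        refine lintegral_mono fun x =>
          (sq_lintegral_mul_le μ (hk_sub x).aemeasurable hf.aemeasurable).trans_eq ?_
        rw [lintegral_sub_left_eq_self k x]
    _ = (∫⁻ z, k z ∂μ) * ∫⁻ ξ, ∫⁻ x, k (x - ξ) * f ξ ^ 2 ∂μ ∂μ := by
        rw [lintegral_const_mul _ hkf.lintegral_prod_right',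
          lintegral_lintegral_swap hkf.aemeasurable]
    _ = (∫⁻ z, k z ∂μ) ^ 2 * ∫⁻ x, f x ^ 2 ∂μ := by
        rw [sq, mul_assoc, ← lintegral_const_mul _ (hf.pow_const 2)]
        congr! 3 with ξ
        rw [lintegral_mul_const _ (hk_sub' ξ), lintegral_sub_right_eq_self k ξ]

theorem eLpNorm_csPotential_le {E F : Type*} [NormedAddCommGroup E] [InnerProductSpace ℝ E]
    [FiniteDimensional ℝ E] [MeasurableSpace E] [BorelSpace E] [NormedAddCommGroup F]
    [NormedSpace ℝ F] {r y : ℝ} (hr : finrank ℝ E < 2 * r) (hy : 0 < y) {f : E → F}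
    (hf : StronglyMeasurable f) :
    eLpNorm (csPotential r f · y) 2 ≤
      ENNReal.ofReal (∫ z : E, csKernel r y z) * eLpNorm f 2 := by
  have hle : ∀ x, ‖csPotential r f x y‖ₑ ≤ ∫⁻ ξ, ‖csKernel r y (x - ξ)‖ₑ * ‖f ξ‖ₑ := fun x => by
    simpa only [enorm_smul, csPotential] using
      enorm_integral_le_lintegral_enorm fun ξ => csKernel r y (x - ξ) • f ξ
  have hK : ENNReal.ofReal (∫ z : E, csKernel r y z) = ∫⁻ z : E, ‖csKernel r y z‖ₑ := by
    rw [ofReal_integral_eq_lintegral_ofReal (integrable_csKernel hr hy)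
      (.of_forall fun z => (csKernel_pos z hy).le)]
    exact lintegral_congr fun z => (Real.enorm_of_nonneg (csKernel_pos z hy).le).symm
  rw [← ENNReal.pow_le_pow_left_iff two_ne_zero, mul_pow, eLpNorm_two_sq,
    eLpNorm_two_sq, hK]
  refine (lintegral_mono fun x => pow_le_pow_left' (hle x) 2).trans
    (lintegral_sq_lintegral_sub_mul_le volume (Continuous.measurable ?_) hf.enorm)
  exact (continuous_csKernel hy).enorm

theorem lintegral_Ioc_rpow_sub_one_le {a b β : ℝ} (ha : 0 ≤ a) (hb : 0 ≤ b) (hβ : 0 < β) :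
    ∫⁻ t in Set.Ioc a b, ENNReal.ofReal (t ^ (β - 1)) ≤ ENNReal.ofReal (b ^ β / β) := by
  have hint : IntervalIntegrable (fun t : ℝ => t ^ (β - 1)) volume 0 b :=
    intervalIntegral.intervalIntegrable_rpow' (by linarith)
  calc ∫⁻ t in Set.Ioc a b, ENNReal.ofReal (t ^ (β - 1))
      ≤ ∫⁻ t in Set.Ioc 0 b, ENNReal.ofReal (t ^ (β - 1)) :=
        lintegral_mono_set (Set.Ioc_subset_Ioc_left ha)
    _ = ENNReal.ofReal (∫ t in (0)..b, t ^ (β - 1)) := by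
        rw [intervalIntegral.integral_of_le hb, ofReal_integral_eq_lintegral_ofReal
          ((intervalIntegrable_iff_integrableOn_Ioc_of_le hb).1 hint)
          (ae_restrict_of_forall_mem measurableSet_Ioc fun t ht => Real.rpow_nonneg ht.1.le _)]
    _ = ENNReal.ofReal (b ^ β / β) := by
        rw [integral_rpow (.inl (by linarith)), sub_add_cancel, Real.zero_rpow hβ.ne', sub_zero]

section FundamentalTheorem

variable {F : Type*} [NormedAddCommGroup F] [NormedSpace ℝ F] {a b β : ℝ}

theorem enorm_sub_le_lintegral_enorm_deriv [CompleteSpace F] {f f' : ℝ → F} {f₀ : F} (hab : a < b)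
    (hf : ∀ t ∈ Set.Ioc a b, HasDerivAt f (f' t) t) (hf' : ContinuousOn f' (Set.Ioc a b))
    (hf₀ : Tendsto f (𝓝[>] a) (𝓝 f₀)) :
    ‖f b - f₀‖ₑ ≤ ∫⁻ t in Set.Ioc a b, ‖f' t‖ₑ := by
  have hlim : Tendsto (fun t => ‖f b - f t‖ₑ) (𝓝[>] a) (𝓝 ‖f b - f₀‖ₑ) :=
    (tendsto_const_nhds.sub hf₀).enorm
  refine le_of_tendsto hlim ?_
  filter_upwards [Ioo_mem_nhdsGT hab] with c hc
  have hsub : Set.uIcc c b ⊆ Set.Ioc a b := by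
    rw [Set.uIcc_of_le hc.2.le]
    exact fun t ht => ⟨hc.1.trans_le ht.1, ht.2⟩
  rw [← intervalIntegral.integral_eq_sub_of_hasDerivAt (fun t ht => hf t (hsub ht))
    (hf'.mono hsub).intervalIntegrable, intervalIntegral.integral_of_le hc.2.le]
  exact (enorm_integral_le_lintegral_enorm _).trans
    (lintegral_mono_set (Set.Ioc_subset_Ioc_left hc.1.le))

theorem enorm_sub_sq_le_lintegral_enorm_deriv_sq [CompleteSpace F] {f f' : ℝ → F} {f₀ : F}
    (ha : 0 ≤ a) (hab : a < b) (hβ : 0 < β) (hf : ∀ t ∈ Set.Ioc a b, HasDerivAt f (f' t) t)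
    (hf' : ContinuousOn f' (Set.Ioc a b)) (hf₀ : Tendsto f (𝓝[>] a) (𝓝 f₀)) :
    ‖f b - f₀‖ₑ ^ 2 ≤ ENNReal.ofReal (b ^ β / β) *
      ∫⁻ t in Set.Ioc a b, ENNReal.ofReal (t ^ (1 - β)) * ‖f' t‖ₑ ^ 2 := by
  have hmul : ∀ t ∈ Set.Ioc a b, ENNReal.ofReal (t ^ (β - 1)) * ENNReal.ofReal (t ^ (1 - β)) = 1 :=
    fun t ht => by
      have ht₀ := ha.trans_lt ht.1
      rw [← ENNReal.ofReal_mul (by positivity), ← Real.rpow_add ht₀]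
      simp
  calc ‖f b - f₀‖ₑ ^ 2 ≤ (∫⁻ t in Set.Ioc a b, ‖f' t‖ₑ) ^ 2 := by
        gcongr; exact enorm_sub_le_lintegral_enorm_deriv hab hf hf' hf₀
    _ = (∫⁻ t in Set.Ioc a b, ENNReal.ofReal (t ^ (β - 1)) *
          (ENNReal.ofReal (t ^ (1 - β)) * ‖f' t‖ₑ)) ^ 2 := by
        congr 1
        refine setLIntegral_congr_fun measurableSet_Ioc fun t ht => ?_
        rw [← mul_assoc, hmul t ht, one_mul]
    _ ≤ (∫⁻ t in Set.Ioc a b, ENNReal.ofReal (t ^ (β - 1))) *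
          ∫⁻ t in Set.Ioc a b, ENNReal.ofReal (t ^ (β - 1)) *
            (ENNReal.ofReal (t ^ (1 - β)) * ‖f' t‖ₑ) ^ 2 :=
        sq_lintegral_mul_le _ (by fun_prop) (AEMeasurable.mul (by fun_prop)
          (hf'.aestronglyMeasurable measurableSet_Ioc).enorm)
    _ ≤ ENNReal.ofReal (b ^ β / β) *
          ∫⁻ t in Set.Ioc a b, ENNReal.ofReal (t ^ (1 - β)) * ‖f' t‖ₑ ^ 2 := by
        gcongr ?_ * ?_
        · exact lintegral_Ioc_rpow_sub_one_le ha (ha.trans hab.le) hβ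
        · refine (setLIntegral_congr_fun measurableSet_Ioc fun t ht => ?_).le
          rw [mul_pow, sq (ENNReal.ofReal _), ← mul_assoc, ← mul_assoc, hmul t ht, one_mul]

theorem lintegral_enorm_sub_sq_le {X : Type*} [MeasurableSpace X] (μ : Measure X) [SFinite μ]
    [CompleteSpace F] {f f' : X → ℝ → F} {f₀ : X → F} (ha : 0 ≤ a) (hab : a < b) (hβ : 0 < β)
    (hf : ∀ x, ∀ t ∈ Set.Ioc a b, HasDerivAt (f x) (f' x t) t)
    (hf' : ∀ x, ContinuousOn (f' x) (Set.Ioc a b))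
    (hf₀ : ∀ x, Tendsto (f x) (𝓝[>] a) (𝓝 (f₀ x)))
    (hmeas : AEStronglyMeasurable (fun p : X × ℝ => f' p.1 p.2)
      (μ.prod (volume.restrict (Set.Ioc a b)))) :
    ∫⁻ x, ‖f x b - f₀ x‖ₑ ^ 2 ∂μ ≤ ENNReal.ofReal (b ^ β / β) *
      ∫⁻ t in Set.Ioc a b, ENNReal.ofReal (t ^ (1 - β)) * ∫⁻ x, ‖f' x t‖ₑ ^ 2 ∂μ := by
  refine (lintegral_mono fun x => enorm_sub_sq_le_lintegral_enorm_deriv_sq ha hab hβ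
    (hf x) (hf' x) (hf₀ x)).trans_eq ?_
  have hmeas' : AEMeasurable (fun p : X × ℝ => ENNReal.ofReal (p.2 ^ (1 - β)) * ‖f' p.1 p.2‖ₑ ^ 2)
      (μ.prod (volume.restrict (Set.Ioc a b))) :=
    AEMeasurable.mul (by fun_prop) (hmeas.enorm.pow_const 2)
  rw [lintegral_const_mul' _ _ ENNReal.ofReal_ne_top, lintegral_lintegral_swap hmeas']
  simp only [lintegral_const_mul' _ _ ENNReal.ofReal_ne_top]

end FundamentalTheorem

end SquareIntegrals

section Extension

variable {E F : Type*} [NormedAddCommGroup E] [InnerProductSpace ℝ E] {s y : ℝ}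

variable (E) in
/-- The exponent `(n + 2s)/2` of the kernel of the Caffarelli–Silvestre extension. -/
noncomputable def csExponent (s : ℝ) : ℝ := (finrank ℝ E + 2 * s) / 2

theorem finrank_lt_two_mul_csExponent (hs : 0 < s) : finrank ℝ E < 2 * csExponent E s := by
  rw [csExponent]; linarith

theorem csExponent_pos (hs : 0 < s) : 0 < csExponent E s := by rw [csExponent]; positivity

variable [FiniteDimensional ℝ E] [MeasurableSpace E] [BorelSpace E]

variable (E) in
/-- The normalizing constant `d_{n,s}` of the Caffarelli–Silvestre extension. -/
noncomputable def csMass (s : ℝ) : ℝ := ∫ z : E, csKernel (csExponent E s) 1 z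

theorem csMass_pos (hs : 0 < s) : 0 < csMass E s :=
  integral_csKernel_pos (finrank_lt_two_mul_csExponent hs) one_pos

theorem integral_csKernel_csExponent (hy : 0 < y) :
    ∫ z : E, csKernel (csExponent E s) y z = y ^ (-(2 * s)) * csMass E s := by
  rw [integral_csKernel hy, csMass]
  congr 2
  rw [csExponent]
  ring

variable [NormedAddCommGroup F] [NormedSpace ℝ F]

/-- The normalized Caffarelli–Silvestre extension of `f` to the half-space. -/
noncomputable def csExtension (s : ℝ) (f : E → F) (x : E) (y : ℝ) : F :=
  ((csMass E s)⁻¹ * y ^ (2 * s)) • csPotential (csExponent E s) f x y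

/-- The weighted normal derivative `y^{1-2s} ∂_y w` of the Caffarelli–Silvestre extension `w` of
`f`, written in terms of potentials of `f`. -/
noncomputable def csFlux (s : ℝ) (f : E → F) (x : E) (y : ℝ) : F :=
  (csMass E s)⁻¹ • ((2 * s) • csPotential (csExponent E s) f x y -
    (2 * csExponent E s * y ^ 2) • csPotential (csExponent E s + 1) f x y)

theorem csExtension_eq (s : ℝ) (f : E → ℝ) (x : E) (y : ℝ) :
    csExtension s f x y =
      (1 / ∫ z : E, (‖z‖ ^ 2 + 1) ^ (-((finrank ℝ E : ℝ) + 2 * s) / 2)) *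
        ∫ ξ : E, y ^ (2 * s) * f ξ *
          (‖x - ξ‖ ^ 2 + y ^ 2) ^ (-((finrank ℝ E : ℝ) + 2 * s) / 2) := by
  simp only [csExtension, csMass, csPotential, csKernel, csExponent, one_pow, smul_eq_mul,
    mul_assoc, neg_div, one_div, ← integral_const_mul]
  congr 2 with ξ
  ring

theorem stronglyMeasurable_csExtension {f : E → F} (hf : StronglyMeasurable f) :
    StronglyMeasurable fun p : E × ℝ => csExtension s f p.1 p.2 :=
  (by fun_prop : Measurable fun p : E × ℝ => (csMass E s)⁻¹ * p.2 ^ (2 * s)).stronglyMeasurable.smul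
    (stronglyMeasurable_csPotential _ hf)

theorem stronglyMeasurable_csFlux {f : E → F} (hf : StronglyMeasurable f) :
    StronglyMeasurable fun p : E × ℝ => csFlux s f p.1 p.2 := by
  have hy : Measurable fun p : E × ℝ => 2 * csExponent E s * p.2 ^ 2 := by fun_prop
  exact (((stronglyMeasurable_csPotential _ hf).const_smul _).sub
    (hy.stronglyMeasurable.smul (stronglyMeasurable_csPotential _ hf))).const_smul _

theorem hasDerivAt_csExtension (hs : 0 < s) (hy : 0 < y) {f : E → F} (hf : Integrable f) (x : E) :
    HasDerivAt (csExtension s f x) (y ^ (2 * s - 1) • csFlux s f x y) y := by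
  have hB := hasDerivAt_csPotential hf (csExponent_pos (E := E) hs).le hy x
  have hpow := (Real.hasDerivAt_rpow_const (p := 2 * s) (.inl hy.ne')).const_mul (csMass E s)⁻¹
  refine (hpow.smul hB).congr_deriv ?_
  rw [csFlux, ← sub_add_cancel (2 * s) 1, Real.rpow_add_one hy.ne', sub_add_cancel]
  module

theorem hasFDerivAt_csExtension (f : 𝓢(E, F)) (hs : 0 < s) (hy : 0 < y) (x : E) :
    HasFDerivAt (csExtension s f · y) (csExtension s (fderiv ℝ f) x y) x :=
  (hasFDerivAt_csPotential f (finrank_lt_two_mul_csExponent hs) hy x).const_smul _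

theorem hasDerivAt_csFlux (f : 𝓢(E, F)) (hs : 0 < s) (hy : 0 < y) (x : E) :
    HasDerivAt (csFlux s f x) (-(y ^ (1 - 2 * s) • csExtension s (Δ f : 𝓢(E, F)) x y)) y := by
  have hr := (csExponent_pos (E := E) hs).le
  have hB := hasDerivAt_csPotential f.integrable hr hy x
  have hB' := hasDerivAt_csPotential f.integrable (by positivity : 0 ≤ csExponent E s + 1) hy x
  have hsq := (hasDerivAt_pow 2 y).const_mul (2 * csExponent E s)
  have hn : (finrank ℝ E : ℝ) = 2 * csExponent E s - 2 * s := by rw [csExponent]; ring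
  have hpow : y ^ (1 - 2 * s) * ((csMass E s)⁻¹ * y ^ (2 * s)) = (csMass E s)⁻¹ * y := by
    rw [mul_left_comm, ← Real.rpow_add hy, sub_add_cancel, Real.rpow_one]
  refine (((hB.const_smul (2 * s)).sub (hsq.smul hB')).const_smul (csMass E s)⁻¹).congr_deriv ?_
  rw [csExtension, smul_smul (y ^ (1 - 2 * s)), hpow, csPotential_laplacian f hr hy, hn,
    add_assoc _ (1 : ℝ) 1, one_add_one_eq_two]
  simp only [Nat.cast_ofNat, Nat.add_one_sub_one, pow_one]
  module

theorem tendsto_csExtension [CompleteSpace F] (f : 𝓢(E, F)) (hs : 0 < s) (x : E) :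
    Tendsto (csExtension s f x) (𝓝[>] 0) (𝓝 (f x)) := by
  have h := (tendsto_rpow_smul_csPotential f (finrank_lt_two_mul_csExponent hs) x).const_smul
    (csMass E s)⁻¹
  have hexp : 2 * csExponent E s - finrank ℝ E = 2 * s := by rw [csExponent]; ring
  rw [← csMass, inv_smul_smul₀ (csMass_pos hs).ne'] at h
  refine h.congr fun y => ?_
  rw [csExtension, hexp, smul_smul]

theorem eLpNorm_csPotential_csExponent_le (hs : 0 < s) (hy : 0 < y) {f : E → F}
    (hf : StronglyMeasurable f) :
    eLpNorm (csPotential (csExponent E s) f · y) 2 volume ≤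
      ENNReal.ofReal (y ^ (-(2 * s)) * csMass E s) * eLpNorm f 2 volume := by
  rw [← integral_csKernel_csExponent hy]
  exact eLpNorm_csPotential_le (finrank_lt_two_mul_csExponent hs) hy hf

theorem eLpNorm_csPotential_csExponent_add_one_le (hs : 0 < s) (hy : 0 < y) {f : E → F}
    (hf : StronglyMeasurable f) :
    eLpNorm (csPotential (csExponent E s + 1) f · y) 2 volume ≤
      ENNReal.ofReal (y ^ (-(2 * s)) * csMass E s / y ^ 2) * eLpNorm f 2 volume := by
  have hn := finrank_lt_two_mul_csExponent (E := E) hs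
  refine (eLpNorm_csPotential_le (by linarith) hy hf).trans ?_
  gcongr
  rw [← integral_csKernel_csExponent hy, le_div_iff₀' (by positivity)]
  exact sq_mul_integral_csKernel_add_one_le hn hy

theorem eLpNorm_csExtension_le (hs : 0 < s) (hy : 0 < y) {f : E → F} (hf : StronglyMeasurable f) :
    eLpNorm (csExtension s f · y) 2 volume ≤ eLpNorm f 2 volume := by
  have hm := csMass_pos (E := E) hs
  have hc : 0 ≤ (csMass E s)⁻¹ * y ^ (2 * s) := by positivity
  calc eLpNorm (csExtension s f · y) 2 volume
      = ‖(csMass E s)⁻¹ * y ^ (2 * s)‖ₑ * eLpNorm (csPotential (csExponent E s) f · y) 2 volume :=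
        eLpNorm_const_smul ((csMass E s)⁻¹ * y ^ (2 * s)) _ 2 volume
    _ ≤ ENNReal.ofReal ((csMass E s)⁻¹ * y ^ (2 * s)) *
          (ENNReal.ofReal (y ^ (-(2 * s)) * csMass E s) * eLpNorm f 2 volume) := by
        rw [Real.enorm_of_nonneg hc]
        gcongr
        exact eLpNorm_csPotential_csExponent_le hs hy hf
    _ = eLpNorm f 2 volume := by
        have hone : (csMass E s)⁻¹ * y ^ (2 * s) * (y ^ (-(2 * s)) * csMass E s) = 1 := by
          rw [Real.rpow_neg hy.le]
          field_simp
        rw [← mul_assoc, ← ENNReal.ofReal_mul hc, hone, ENNReal.ofReal_one, one_mul]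

theorem eLpNorm_csFlux_le_add (s : ℝ) (y : ℝ) {f : E → F} (hf : StronglyMeasurable f) :
    eLpNorm (csFlux s f · y) 2 volume ≤ ‖(csMass E s)⁻¹‖ₑ *
      (‖2 * s‖ₑ * eLpNorm (csPotential (csExponent E s) f · y) 2 volume +
        ‖2 * csExponent E s * y ^ 2‖ₑ *
          eLpNorm (csPotential (csExponent E s + 1) f · y) 2 volume) := by
  have hB (r : ℝ) : AEStronglyMeasurable (csPotential r f · y) (volume : Measure E) :=
    ((stronglyMeasurable_csPotential r hf).comp_measurable
      measurable_prodMk_right).aestronglyMeasurable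
  refine (eLpNorm_const_smul (csMass E s)⁻¹ _ 2 volume).trans_le ?_
  gcongr
  refine (eLpNorm_sub_le ((hB _).const_smul _) ((hB _).const_smul _) one_le_two).trans_eq ?_
  exact congr_arg₂ _ (eLpNorm_const_smul _ _ 2 volume) (eLpNorm_const_smul _ _ 2 volume)

theorem eLpNorm_csFlux_le (hs : 0 < s) (hy : 0 < y) {f : E → F} (hf : StronglyMeasurable f) :
    eLpNorm (csFlux s f · y) 2 volume ≤
      ENNReal.ofReal (2 * (s + csExponent E s) * y ^ (-(2 * s))) * eLpNorm f 2 volume := by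
  have hr := csExponent_pos (E := E) hs
  have hm := csMass_pos (E := E) hs
  calc eLpNorm (csFlux s f · y) 2 volume
      ≤ ‖(csMass E s)⁻¹‖ₑ * (‖2 * s‖ₑ *
            (ENNReal.ofReal (y ^ (-(2 * s)) * csMass E s) * eLpNorm f 2 volume) +
          ‖2 * csExponent E s * y ^ 2‖ₑ *
            (ENNReal.ofReal (y ^ (-(2 * s)) * csMass E s / y ^ 2) * eLpNorm f 2 volume)) := by
        refine (eLpNorm_csFlux_le_add s y hf).trans ?_
        gcongr
        · exact eLpNorm_csPotential_csExponent_le hs hy hf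
        · exact eLpNorm_csPotential_csExponent_add_one_le hs hy hf
    _ = ENNReal.ofReal (2 * (s + csExponent E s) * y ^ (-(2 * s))) * eLpNorm f 2 volume := by
        rw [← mul_assoc ‖2 * s‖ₑ, ← mul_assoc ‖2 * csExponent E s * y ^ 2‖ₑ, ← add_mul, ← mul_assoc,
          Real.enorm_of_nonneg (by positivity), Real.enorm_of_nonneg (by positivity),
          Real.enorm_of_nonneg (by positivity), ← ENNReal.ofReal_mul (by positivity),
          ← ENNReal.ofReal_mul (by positivity), ← ENNReal.ofReal_add (by positivity)
          (by positivity), ← ENNReal.ofReal_mul (by positivity)]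
        congr 2
        field_simp

theorem rpow_mul_lintegral_rpow_smul_csExtension_sq_le (hs : 0 < s) (hy : 0 < y) {f : E → F}
    (hf : StronglyMeasurable f) :
    ENNReal.ofReal (y ^ (2 * s - 1)) * ∫⁻ x, ‖y ^ (1 - 2 * s) • csExtension s f x y‖ₑ ^ 2 ≤
      ENNReal.ofReal (y ^ (1 - 2 * s)) * eLpNorm f 2 volume ^ 2 := by
  have hpow : y ^ (2 * s - 1) * (y ^ (1 - 2 * s)) ^ 2 = y ^ (1 - 2 * s) := by
    rw [← Real.rpow_mul_natCast hy.le, ← Real.rpow_add hy]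
    ring_nf
  simp only [enorm_smul, mul_pow]
  rw [lintegral_const_mul' _ _ (by simp), ← eLpNorm_two_sq, ← mul_assoc,
    Real.enorm_of_nonneg (by positivity), ← ENNReal.ofReal_pow (by positivity),
    ← ENNReal.ofReal_mul (by positivity), hpow]
  gcongr
  exact eLpNorm_csExtension_le hs hy hf

theorem eLpNorm_csFlux_sub_le [CompleteSpace F] (hs : s ∈ Set.Ioo 0 1) (f : 𝓢(E, F)) {a b : ℝ}
    (ha : 0 < a) (hab : a < b) :
    eLpNorm (fun x => csFlux s f x b - csFlux s f x a) 2 volume ≤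
      ENNReal.ofReal (b ^ (2 - 2 * s) / (2 - 2 * s)) * eLpNorm (Δ f : 𝓢(E, F)) 2 volume := by
  obtain ⟨hs₀, hs₁⟩ := hs
  have hpos : ∀ t ∈ Set.Ioc a b, 0 < t := fun t ht => ha.trans ht.1
  have hcont : ∀ x, ContinuousOn
      (fun t : ℝ => -(t ^ (1 - 2 * s) • csExtension s (Δ f : 𝓢(E, F)) x t)) (Set.Ioc a b) :=
    fun x => ((continuousOn_id.rpow_const fun t ht => .inl (hpos t ht).ne').smul fun t ht =>
      (hasDerivAt_csExtension hs₀ (hpos t ht)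
        (Δ f).integrable x).continuousAt.continuousWithinAt).neg
  have hmeas : StronglyMeasurable fun p : E × ℝ =>
      -(p.2 ^ (1 - 2 * s) • csExtension s (Δ f : 𝓢(E, F)) p.1 p.2) :=
    ((by fun_prop : Measurable fun p : E × ℝ => p.2 ^ (1 - 2 * s)).stronglyMeasurable.smul
      (stronglyMeasurable_csExtension (Δ f).continuous.stronglyMeasurable)).neg
  have hftc := lintegral_enorm_sub_sq_le (β := 2 - 2 * s) volume ha.le hab (by linarith)
    (fun x t ht => hasDerivAt_csFlux f hs₀ (hpos t ht) x) hcont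
    (fun x => (hasDerivAt_csFlux f hs₀ ha x).continuousAt.continuousWithinAt)
    hmeas.aestronglyMeasurable
  rw [← ENNReal.pow_le_pow_left_iff two_ne_zero, mul_pow, eLpNorm_two_sq, sq, mul_assoc]
  refine hftc.trans ?_
  gcongr
  have hexp : 1 - (2 - 2 * s) = 2 * s - 1 := by ring
  have hexp' : 1 - 2 * s = 2 - 2 * s - 1 := by ring
  calc ∫⁻ t in Set.Ioc a b, ENNReal.ofReal (t ^ (1 - (2 - 2 * s))) *
        ∫⁻ x, ‖-(t ^ (1 - 2 * s) • csExtension s (Δ f : 𝓢(E, F)) x t)‖ₑ ^ 2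
      ≤ ∫⁻ t in Set.Ioc a b, ENNReal.ofReal (t ^ (1 - 2 * s)) *
          eLpNorm (Δ f : 𝓢(E, F)) 2 volume ^ 2 := by
        simp only [enorm_neg, hexp]
        exact setLIntegral_mono' measurableSet_Ioc fun t ht =>
          rpow_mul_lintegral_rpow_smul_csExtension_sq_le hs₀ (hpos t ht)
            (Δ f).continuous.stronglyMeasurable
    _ ≤ ENNReal.ofReal (b ^ (2 - 2 * s) / (2 - 2 * s)) * eLpNorm (Δ f : 𝓢(E, F)) 2 volume ^ 2 := by
        rw [lintegral_mul_const _ (by fun_prop), hexp']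
        gcongr
        exact lintegral_Ioc_rpow_sub_one_le ha.le (ha.trans hab).le (by linarith)

theorem eLpNorm_csFlux_le_of_lt_one [CompleteSpace F] (hs : s ∈ Set.Ioo 0 1) (f : 𝓢(E, F))
    (hy : 0 < y) (hy₁ : y < 1) :
    eLpNorm (csFlux s f · y) 2 volume ≤ ENNReal.ofReal (2 * (s + csExponent E s)) *
      eLpNorm f 2 volume + ENNReal.ofReal (2 - 2 * s)⁻¹ * eLpNorm (Δ f : 𝓢(E, F)) 2 volume := by
  have hf := f.continuous.stronglyMeasurable
  have hmeas (y : ℝ) : AEStronglyMeasurable (csFlux s f · y) (volume : Measure E) :=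
    ((stronglyMeasurable_csFlux hf).comp_measurable measurable_prodMk_right).aestronglyMeasurable
  calc eLpNorm (csFlux s f · y) 2 volume
      = eLpNorm ((csFlux s f · 1) - fun x => csFlux s f x 1 - csFlux s f x y) 2 volume := by
        congr 1; ext x; simp
    _ ≤ eLpNorm (csFlux s f · 1) 2 volume +
          eLpNorm (fun x => csFlux s f x 1 - csFlux s f x y) 2 volume :=
        eLpNorm_sub_le (hmeas 1) ((hmeas 1).sub (hmeas y)) one_le_two
    _ ≤ _ := by
        gcongr
        · simpa using eLpNorm_csFlux_le hs.1 one_pos hf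
        · simpa using eLpNorm_csFlux_sub_le hs f hy hy₁

theorem exists_eLpNorm_csFlux_le [CompleteSpace F] (hs : s ∈ Set.Ioo 0 1) (f : 𝓢(E, F)) :
    ∃ C : ℝ≥0, ∀ y, 0 < y → eLpNorm (csFlux s f · y) 2 volume ≤ C ∧
      eLpNorm (csFlux s f · y) 2 volume ≤ C * ENNReal.ofReal (y ^ (-(2 * s))) := by
  have hf := f.continuous.stronglyMeasurable
  have hr := csExponent_pos (E := E) hs.1
  set A := ENNReal.ofReal (2 * (s + csExponent E s)) * eLpNorm f 2 volume
  set B := ENNReal.ofReal (2 - 2 * s)⁻¹ * eLpNorm (Δ f : 𝓢(E, F)) 2 volume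
  have htop : A + B ≠ ⊤ := by
    have h₁ := (f.memLp 2).eLpNorm_ne_top
    have h₂ := ((Δ f : 𝓢(E, F)).memLp 2).eLpNorm_ne_top
    finiteness
  have hdecay (y : ℝ) (hy : 0 < y) :
      eLpNorm (csFlux s f · y) 2 volume ≤ A * ENNReal.ofReal (y ^ (-(2 * s))) := by
    refine (eLpNorm_csFlux_le hs.1 hy hf).trans_eq ?_
    rw [ENNReal.ofReal_mul (by have := hs.1; positivity)]
    ring
  refine ⟨(A + B).toNNReal, fun y hy => ?_⟩
  rw [ENNReal.coe_toNNReal htop]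
  refine ⟨?_, (hdecay y hy).trans (by gcongr; exact le_self_add)⟩
  obtain hy₁ | hy₁ := lt_or_ge y 1
  · exact eLpNorm_csFlux_le_of_lt_one hs f hy hy₁
  · calc eLpNorm (csFlux s f · y) 2 volume ≤ A * ENNReal.ofReal (y ^ (-(2 * s))) := hdecay y hy
      _ ≤ A * ENNReal.ofReal 1 := by
          gcongr
          exact Real.rpow_le_one_of_one_le_of_nonpos hy₁ (by linarith [hs.1])
      _ ≤ A + B := by simp

end Extension

section ProductMeasure

variable {X Y F : Type*} [MeasurableSpace X] [MeasurableSpace Y] {μ : Measure X} {ν : Measure Y}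

theorem eLpNorm_two_sq_prod [NormedAddCommGroup F] [SFinite μ] [SFinite ν] {f : X × Y → F}
    (hf : AEStronglyMeasurable f (μ.prod ν)) :
    eLpNorm f 2 (μ.prod ν) ^ 2 = ∫⁻ y, eLpNorm (fun x => f (x, y)) 2 μ ^ 2 ∂ν := by
  simp_rw [eLpNorm_two_sq]
  exact lintegral_prod_symm _ (hf.enorm.pow_const 2)

theorem memLp_two_of_lintegral_ne_top [NormedAddCommGroup F] {f : X → F}
    (hf : AEStronglyMeasurable f μ) (h : ∫⁻ x, ‖f x‖ₑ ^ 2 ∂μ ≠ ⊤) : MemLp f 2 μ := by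
  rw [← eLpNorm_two_sq] at h
  exact ⟨hf, (ENNReal.pow_ne_top_iff.1 h).resolve_right two_ne_zero |>.lt_top⟩

theorem memLp_two_prod_of_bound [NormedAddCommGroup F] [SFinite μ] [IsFiniteMeasure ν]
    {f : X × Y → F} (hf : AEStronglyMeasurable f (μ.prod ν)) {C : ℝ≥0∞} (hC : C ≠ ⊤)
    (h : ∀ᵐ y ∂ν, eLpNorm (fun x => f (x, y)) 2 μ ≤ C) : MemLp f 2 (μ.prod ν) := by
  refine memLp_two_of_lintegral_ne_top hf ?_
  rw [← eLpNorm_two_sq, eLpNorm_two_sq_prod hf]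
  refine ne_top_of_le_ne_top (b := C ^ 2 * ν Set.univ) (by finiteness) ?_
  rw [← lintegral_const]
  exact lintegral_mono_ae (h.mono fun y hy => by gcongr)

theorem ae_memLp_two_of_prod [NormedAddCommGroup F] [SFinite μ] [SFinite ν] {f : X × Y → F}
    (hf : MemLp f 2 (μ.prod ν)) : ∀ᵐ y ∂ν, MemLp (fun x => f (x, y)) 2 μ := by
  have h : ∫⁻ y, eLpNorm (fun x => f (x, y)) 2 μ ^ 2 ∂ν ≠ ⊤ := by
    rw [← eLpNorm_two_sq_prod hf.1]
    exact ENNReal.pow_ne_top hf.2.ne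
  filter_upwards [ae_lt_top' (by
    simp_rw [eLpNorm_two_sq]; exact (hf.1.enorm.pow_const 2).lintegral_prod_left') h,
    hf.1.prodMk_right] with y hy hmeas
  exact ⟨hmeas, ((ENNReal.pow_ne_top_iff.1 hy.ne).resolve_right two_ne_zero).lt_top⟩

end ProductMeasure

section InnerProduct

variable {α H : Type*} [MeasurableSpace α] {μ : Measure α}

theorem lintegral_enorm_mul_le {f g : α → ℝ} (hf : AEStronglyMeasurable f μ)
    (hg : AEStronglyMeasurable g μ) :
    ∫⁻ x, ‖f x * g x‖ₑ ∂μ ≤ eLpNorm f 2 μ * eLpNorm g 2 μ := by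
  simpa only [eLpNorm_one_eq_lintegral_enorm, smul_eq_mul, Pi.mul_apply] using
    eLpNorm_smul_le_mul_eLpNorm (p := 2) (q := 2) (r := 1) hg hf

variable [NormedAddCommGroup H] {f g : α → H}

theorem lintegral_enorm_sq_eq_ofReal (hf : MemLp f 2 μ) :
    ∫⁻ x, ‖f x‖ₑ ^ 2 ∂μ = ENNReal.ofReal (∫ x, ‖f x‖ ^ 2 ∂μ) := by
  rw [ofReal_integral_eq_lintegral_ofReal (hf.integrable_norm_pow two_ne_zero)
    (.of_forall fun x => by positivity)]
  simp_rw [ENNReal.ofReal_pow (norm_nonneg _), ofReal_norm]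

variable [InnerProductSpace ℝ H]

theorem integrable_inner_of_memLp_two (hf : MemLp f 2 μ) (hg : MemLp g 2 μ) :
    Integrable (fun x => ⟪f x, g x⟫_ℝ) μ :=
  (hf.norm.integrable_mul hg.norm).mono (hf.1.inner hg.1) <| .of_forall fun x => by
    simpa using norm_inner_le_norm (𝕜 := ℝ) (f x) (g x)

theorem lintegral_enorm_sq_le_add_inner_sub (hf : MemLp f 2 μ) (hg : MemLp g 2 μ) :
    ∫⁻ x, ‖f x‖ₑ ^ 2 ∂μ ≤ ∫⁻ x, ‖g x‖ₑ ^ 2 ∂μ + 2 * ‖∫ x, ⟪f x, g x - f x⟫_ℝ ∂μ‖ₑ := by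
  have hconvex (x : α) : ‖f x‖ ^ 2 + 2 * ⟪f x, g x - f x⟫_ℝ ≤ ‖g x‖ ^ 2 := by
    have h := norm_add_sq_real (f x) (g x - f x)
    rw [add_sub_cancel] at h
    nlinarith [sq_nonneg ‖g x - f x‖]
  have hint : Integrable (fun x => 2 * ⟪f x, g x - f x⟫_ℝ) μ :=
    (integrable_inner_of_memLp_two hf (hg.sub hf)).const_mul 2
  have hf₂ := hf.integrable_norm_pow two_ne_zero
  have h := integral_mono (hf₂.add hint) (hg.integrable_norm_pow two_ne_zero) hconvex
  rw [integral_add' hf₂ hint, integral_const_mul] at h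
  rw [lintegral_enorm_sq_eq_ofReal hf, lintegral_enorm_sq_eq_ofReal hg, ← ofReal_norm (∫ x, _ ∂μ),
    ← ENNReal.ofReal_ofNat, ← ENNReal.ofReal_mul zero_le_two,
    ← ENNReal.ofReal_add (by positivity) (by positivity), Real.norm_eq_abs]
  exact ENNReal.ofReal_le_ofReal (by linarith [neg_abs_le (∫ x, ⟪f x, g x - f x⟫_ℝ ∂μ)])

end InnerProduct

section Weight

/-- The measure `y ^ (1 - 2 * s) dy` on `S`, whose product with the Lebesgue measure of `E` is the
weight of the Dirichlet energy. -/
noncomputable def csWeight (s : ℝ) (S : Set ℝ) : Measure ℝ :=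
  (volume.restrict S).withDensity fun y => ENNReal.ofReal (y ^ (1 - 2 * s))

variable {s a b : ℝ} {S T : Set ℝ}

instance : SFinite (csWeight s S) := inferInstanceAs (SFinite (Measure.withDensity _ _))

theorem lintegral_csWeight (s : ℝ) (S : Set ℝ) (f : ℝ → ℝ≥0∞) :
    ∫⁻ y, f y ∂csWeight s S = ∫⁻ y in S, ENNReal.ofReal (y ^ (1 - 2 * s)) * f y :=
  lintegral_withDensity_eq_lintegral_mul_non_measurable _ (by fun_prop) (by simp) f

theorem integral_csWeight {F : Type*} [NormedAddCommGroup F] [NormedSpace ℝ F]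
    (hS : MeasurableSet S) (hS₀ : S ⊆ Set.Ioi 0) (f : ℝ → F) :
    ∫ y, f y ∂csWeight s S = ∫ y in S, y ^ (1 - 2 * s) • f y := by
  rw [csWeight, integral_withDensity_eq_integral_toReal_smul (by fun_prop) (by simp)]
  exact setIntegral_congr_fun hS fun y hy => by
    rw [ENNReal.toReal_ofReal (Real.rpow_nonneg (hS₀ hy).le _)]

theorem csWeight_absolutelyContinuous : csWeight s S ≪ volume.restrict S :=
  withDensity_absolutelyContinuous _ _

theorem absolutelyContinuous_csWeight (hS : MeasurableSet S) (hS₀ : S ⊆ Set.Ioi 0) :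
    volume.restrict S ≪ csWeight s S :=
  withDensity_absolutelyContinuous' (by fun_prop) <| (ae_restrict_mem hS).mono fun y hy =>
    (ENNReal.ofReal_pos.2 (Real.rpow_pos_of_pos (hS₀ hy) _)).ne'

theorem ae_csWeight_mem (hS : MeasurableSet S) : ∀ᵐ y ∂csWeight s S, y ∈ S :=
  csWeight_absolutelyContinuous (ae_restrict_mem hS)

theorem restrict_csWeight (hS : MeasurableSet S) (h : S ⊆ T) :
    (csWeight s T).restrict S = csWeight s S := by
  rw [csWeight, restrict_withDensity hS, Measure.restrict_restrict_of_subset h, csWeight]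

theorem csWeight_mono (hS : MeasurableSet S) (h : S ⊆ T) : csWeight s S ≤ csWeight s T :=
  (restrict_csWeight hS h).symm.trans_le Measure.restrict_le_self

theorem isFiniteMeasure_csWeight_Ioc (hs : s < 1) (ha : 0 ≤ a) (b : ℝ) :
    IsFiniteMeasure (csWeight s (Set.Ioc a b)) := by
  obtain hb | hb := lt_or_ge b 0
  · rw [Set.Ioc_eq_empty (by linarith)]
    exact ⟨by simp [csWeight]⟩
  refine ⟨?_⟩
  have h := lintegral_Ioc_rpow_sub_one_le ha hb (by linarith : 0 < 2 - 2 * s)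
  rw [csWeight, withDensity_apply _ .univ, Measure.restrict_univ]
  simpa only [show (2 : ℝ) - 2 * s - 1 = 1 - 2 * s by ring] using h.trans_lt ENNReal.ofReal_lt_top

end Weight

section HalfSpace

variable {E F : Type*} [NormedAddCommGroup E] [MeasurableSpace E] [OpensMeasurableSpace E]
  [SecondCountableTopology E] [NormedAddCommGroup F] {s : ℝ} {S : Set ℝ} {μ : Measure E}

theorem aestronglyMeasurable_prod_csWeight [SFinite μ] {g : E × ℝ → F}
    (hg : ContinuousOn g {p | 0 < p.2}) (hS : MeasurableSet S) (hS₀ : S ⊆ Set.Ioi 0) :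
    AEStronglyMeasurable g (μ.prod (csWeight s S)) := by
  have h : μ.prod (volume.restrict S) = (μ.prod volume).restrict (Set.univ ×ˢ S) := by
    rw [← Measure.prod_restrict, Measure.restrict_univ]
  refine AEStronglyMeasurable.mono_ac (.prod .rfl csWeight_absolutelyContinuous) ?_
  rw [h]
  exact (hg.mono fun p hp => hS₀ hp.2).aestronglyMeasurable (.prod .univ hS)

end HalfSpace

section Gradient

variable {E : Type*} [NormedAddCommGroup E] [InnerProductSpace ℝ E] {s : ℝ} {v φ : E → ℝ → ℝ}

/-- The regularity along the horizontal and vertical slices of the half-space which the divergence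
theorem needs; it is easier to check for an extension than joint smoothness. -/
structure SliceContDiff (v : E → ℝ → ℝ) : Prop where
  differentiable_left : ∀ ⦃y⦄, 0 < y → Differentiable ℝ (v · y)
  contDiffOn_right : ∀ x, ContDiffOn ℝ 1 (v x) (Set.Ioi 0)

theorem SliceContDiff.differentiableAt_right (hv : SliceContDiff v) (x : E) {y : ℝ} (hy : 0 < y) :
    DifferentiableAt ℝ (v x) y :=
  ((hv.contDiffOn_right x).differentiableOn one_ne_zero).differentiableAt (Ioi_mem_nhds hy)

theorem SliceContDiff.continuousOn_deriv (hv : SliceContDiff v) (x : E) :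
    ContinuousOn (deriv (v x)) (Set.Ioi 0) :=
  (hv.contDiffOn_right x).continuousOn_deriv_of_isOpen isOpen_Ioi le_rfl

theorem SliceContDiff.sub (hv : SliceContDiff v) (hφ : SliceContDiff φ) :
    SliceContDiff fun x y => v x y - φ x y where
  differentiable_left _ hy := (hv.differentiable_left hy).sub (hφ.differentiable_left hy)
  contDiffOn_right x := (hv.contDiffOn_right x).sub (hφ.contDiffOn_right x)

theorem sliceContDiff_of_contDiffOn
    (hv : ContDiffOn ℝ 1 (fun p : E × ℝ => v p.1 p.2) {p | 0 < p.2}) : SliceContDiff v where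
  differentiable_left y hy x := by
    have h : DifferentiableAt ℝ (fun p : E × ℝ => v p.1 p.2) (x, y) :=
      (hv.differentiableOn one_ne_zero).differentiableAt
        ((isOpen_lt continuous_const continuous_snd).mem_nhds hy)
    exact h.comp x (f := fun x' => (x', y)) (by fun_prop)
  contDiffOn_right x := hv.comp (f := fun t => (x, t)) (by fun_prop) fun _ ht => ht

section

variable [CompleteSpace E]

/-- The gradient of `v` in the half-space, as an element of the Hilbert sum of `E` and `ℝ`. -/
noncomputable def halfSpaceGradient (v : E → ℝ → ℝ) (p : E × ℝ) : WithLp 2 (E × ℝ) :=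
  WithLp.toLp 2 (∇ (v · p.2) p.1, deriv (v p.1) p.2)

theorem norm_gradient (f : E → ℝ) (x : E) : ‖∇ f x‖ = ‖fderiv ℝ f x‖ :=
  LinearIsometryEquiv.norm_map _ _

theorem norm_halfSpaceGradient_sq (v : E → ℝ → ℝ) (x : E) (y : ℝ) :
    ‖halfSpaceGradient v (x, y)‖ ^ 2 = ‖fderiv ℝ (v · y) x‖ ^ 2 + deriv (v x) y ^ 2 := by
  simp [halfSpaceGradient, WithLp.prod_norm_sq_eq_of_L2, norm_gradient]

theorem inner_halfSpaceGradient (v φ : E → ℝ → ℝ) (p : E × ℝ) :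
    ⟪halfSpaceGradient v p, halfSpaceGradient φ p⟫_ℝ =
      ⟪∇ (v · p.2) p.1, ∇ (φ · p.2) p.1⟫_ℝ + deriv (v p.1) p.2 * deriv (φ p.1) p.2 := by
  simp [halfSpaceGradient, WithLp.prod_inner_apply, mul_comm]

theorem norm_halfSpaceGradient_le (v : E → ℝ → ℝ) (p : E × ℝ) :
    ‖halfSpaceGradient v p‖ ≤ ‖∇ (v · p.2) p.1‖ + ‖deriv (v p.1) p.2‖ := by
  refine le_of_sq_le_sq ?_ (by positivity)
  rw [halfSpaceGradient, WithLp.prod_norm_sq_eq_of_L2, WithLp.toLp_fst, WithLp.toLp_snd]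
  nlinarith [norm_nonneg (∇ (v · p.2) p.1), norm_nonneg (deriv (v p.1) p.2)]

theorem SliceContDiff.halfSpaceGradient_sub (hv : SliceContDiff v) (hφ : SliceContDiff φ)
    {p : E × ℝ} (hp : 0 < p.2) :
    halfSpaceGradient (fun x y => v x y - φ x y) p =
      halfSpaceGradient v p - halfSpaceGradient φ p := by
  have hx : ∇ (fun x => v x p.2 - φ x p.2) p.1 = ∇ (v · p.2) p.1 - ∇ (φ · p.2) p.1 := by
    rw [gradient, fderiv_fun_sub (hv.differentiable_left hp _) (hφ.differentiable_left hp _),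
      map_sub, gradient, gradient]
  have hy : deriv (fun t => v p.1 t - φ p.1 t) p.2 = deriv (v p.1) p.2 - deriv (φ p.1) p.2 :=
    deriv_fun_sub (hv.differentiableAt_right _ hp) (hφ.differentiableAt_right _ hp)
  rw [halfSpaceGradient, hx, hy, ← Prod.mk_sub_mk, WithLp.toLp_sub, halfSpaceGradient,
    halfSpaceGradient]

theorem continuousOn_halfSpaceGradient
    (hv : ContDiffOn ℝ 1 (fun p : E × ℝ => v p.1 p.2) {p | 0 < p.2}) :
    ContinuousOn (halfSpaceGradient v) {p | 0 < p.2} := by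
  set V := fun p : E × ℝ => v p.1 p.2
  have ho : IsOpen {p : E × ℝ | 0 < p.2} := isOpen_lt continuous_const continuous_snd
  have hV (p : E × ℝ) (hp : 0 < p.2) : HasFDerivAt V (fderiv ℝ V p) p :=
    ((hv.differentiableOn one_ne_zero).differentiableAt (ho.mem_nhds hp)).hasFDerivAt
  have hV' := hv.continuousOn_fderiv_of_isOpen ho le_rfl
  have hx : ContinuousOn (fun p : E × ℝ => ∇ (v · p.2) p.1) {p | 0 < p.2} := by
    refine ((InnerProductSpace.toDual ℝ E).symm.continuous.comp_continuousOn
      (hV'.clm_comp (continuousOn_const (c := ContinuousLinearMap.inl ℝ E ℝ)))).congr fun p hp => ?_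
    have h := (hV p hp).comp (f := fun x' => (x', p.2)) p.1 (hasFDerivAt_prodMk_left p.1 p.2)
    exact congrArg _ h.fderiv
  have hy : ContinuousOn (fun p : E × ℝ => deriv (v p.1) p.2) {p | 0 < p.2} := by
    refine (hV'.clm_apply (continuousOn_const (c := (0, 1)))).congr fun p hp => ?_
    have h := (hV p hp).comp (f := fun t => (p.1, t)) p.2 (hasFDerivAt_prodMk_right p.1 p.2)
    exact h.hasDerivAt.deriv.trans (by simp)
  exact (WithLp.prod_continuous_toLp 2 E ℝ).comp_continuousOn (hx.prodMk hy)

end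

variable [FiniteDimensional ℝ E] [MeasurableSpace E] [BorelSpace E]

/-- The weighted Dirichlet energy `ℰ_s(v)`. -/
noncomputable def csEnergy (s : ℝ) (v : E → ℝ → ℝ) : ℝ≥0∞ :=
  ∫⁻ y in Set.Ioi (0 : ℝ), ∫⁻ x : E, ENNReal.ofReal (y ^ (1 - 2 * s) *
    (‖fderiv ℝ (fun x' => v x' y) x‖ ^ 2 + (deriv (fun t => v x t) y) ^ 2))

theorem csEnergy_eq_lintegral_csWeight (s : ℝ) (v : E → ℝ → ℝ) :
    csEnergy s v = ∫⁻ y, (∫⁻ x, ‖halfSpaceGradient v (x, y)‖ₑ ^ 2) ∂csWeight s (Set.Ioi 0) := by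
  rw [lintegral_csWeight, csEnergy]
  refine setLIntegral_congr_fun measurableSet_Ioi fun y hy => ?_
  rw [Set.mem_Ioi] at hy
  rw [← lintegral_const_mul' _ _ ENNReal.ofReal_ne_top]
  congr! with x
  rw [ENNReal.ofReal_mul (by positivity), ← norm_halfSpaceGradient_sq,
    ENNReal.ofReal_pow (norm_nonneg _), ofReal_norm]

theorem csEnergy_eq_lintegral_prod
    (hv : AEStronglyMeasurable (halfSpaceGradient v) (volume.prod (csWeight s (Set.Ioi 0)))) :
    csEnergy s v =
      ∫⁻ p, ‖halfSpaceGradient v p‖ₑ ^ 2 ∂(volume : Measure E).prod (csWeight s (Set.Ioi 0)) := by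
  rw [csEnergy_eq_lintegral_csWeight, lintegral_prod_symm _ (hv.enorm.pow_const 2)]

end Gradient

section Exhaustion

variable {E : Type*} [NormedAddCommGroup E] [InnerProductSpace ℝ E] [FiniteDimensional ℝ E]
  [MeasurableSpace E] [BorelSpace E] {s : ℝ} {v : E → ℝ → ℝ}

theorem tendsto_lintegral_csWeight_Ioc {f : ℝ → ℝ≥0∞}
    (hf : AEMeasurable f (csWeight s (Set.Ioi 0))) :
    Tendsto (fun p : ℝ × ℝ => ∫⁻ y, f y ∂csWeight s (Set.Ioc p.1 p.2)) (𝓝[>] 0 ×ˢ atTop)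
      (𝓝 (∫⁻ y, f y ∂csWeight s (Set.Ioi 0))) := by
  have hcover : AECover (csWeight s (Set.Ioi 0)) (𝓝[>] 0 ×ˢ atTop)
      fun p : ℝ × ℝ => Set.Ioc p.1 p.2 :=
    { ae_eventually_mem := (ae_csWeight_mem measurableSet_Ioi).mono fun y hy =>
        (tendsto_fst.eventually (nhdsWithin_le_nhds (Iio_mem_nhds hy))).and
          (tendsto_snd.eventually (eventually_ge_atTop y))
      measurableSet := fun _ => measurableSet_Ioc }
  refine (hcover.lintegral_tendsto_of_countably_generated hf).congr' ?_
  filter_upwards [tendsto_fst.eventually self_mem_nhdsWithin] with p hp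
  rw [restrict_csWeight measurableSet_Ioc
    (Set.Ioc_subset_Ioi_self.trans (Set.Ioi_subset_Ioi (le_of_lt hp)))]

theorem csEnergy_le_of_forall_Ioc {C : ℝ≥0∞} {K : ℝ → ℝ≥0∞}
    (hv : AEStronglyMeasurable (halfSpaceGradient v) (volume.prod (csWeight s (Set.Ioi 0))))
    (hK₀ : Tendsto K (𝓝[>] 0) (𝓝 0)) (hK : Tendsto K atTop (𝓝 0))
    (h : ∀ ⦃a b⦄, 0 < a → a < b → ∫⁻ p, ‖halfSpaceGradient v p‖ₑ ^ 2
      ∂(volume : Measure E).prod (csWeight s (Set.Ioc a b)) ≤ C + (K a + K b)) :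
    csEnergy s v ≤ C := by
  have hlim : Tendsto (fun p : ℝ × ℝ => C + (K p.1 + K p.2)) (𝓝[>] 0 ×ˢ atTop) (𝓝 C) := by
    simpa using tendsto_const_nhds.add ((hK₀.comp tendsto_fst).add (hK.comp tendsto_snd))
  rw [csEnergy_eq_lintegral_csWeight]
  refine le_of_tendsto_of_tendsto
    (tendsto_lintegral_csWeight_Ioc (hv.enorm.pow_const 2).lintegral_prod_left') hlim ?_
  have hlt : ∀ᶠ p : ℝ × ℝ in 𝓝[>] 0 ×ˢ atTop, p.1 < 1 ∧ 1 < p.2 :=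
    (tendsto_fst.eventually (nhdsWithin_le_nhds (Iio_mem_nhds one_pos))).and
      (tendsto_snd.eventually (eventually_gt_atTop 1))
  filter_upwards [tendsto_fst.eventually self_mem_nhdsWithin, hlt] with p hp₀ hp
  have hsub : Set.Ioc p.1 p.2 ⊆ Set.Ioi 0 :=
    Set.Ioc_subset_Ioi_self.trans (Set.Ioi_subset_Ioi (le_of_lt hp₀))
  have hmeas := hv.mono_measure (Measure.prod_mono le_rfl (csWeight_mono measurableSet_Ioc hsub))
  rw [← lintegral_prod_symm _ (hmeas.enorm.pow_const 2)]
  exact h hp₀ (hp.1.trans hp.2)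

theorem eLpNorm_sub_trace_sq_le (hs : 0 < s) {v₀ : E → ℝ} (hv : SliceContDiff v)
    (hv₀ : ∀ x, Tendsto (v x) (𝓝[>] 0) (𝓝 (v₀ x)))
    (hmeas : AEStronglyMeasurable (fun p : E × ℝ => deriv (v p.1) p.2)
      (volume.prod (csWeight s (Set.Ioi 0)))) {b : ℝ} (hb : 0 < b) :
    eLpNorm (fun x => v x b - v₀ x) 2 volume ^ 2 ≤ ENNReal.ofReal (b ^ (2 * s) / (2 * s)) *
      eLpNorm (fun p : E × ℝ => deriv (v p.1) p.2) 2
        (volume.prod (csWeight s (Set.Ioi 0))) ^ 2 := by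
  have hsub : Set.Ioc 0 b ⊆ Set.Ioi 0 := Set.Ioc_subset_Ioi_self
  have hac : volume.restrict (Set.Ioc 0 b) ≪ csWeight s (Set.Ioi 0) :=
    (absolutelyContinuous_csWeight measurableSet_Ioc hsub).trans
      (csWeight_mono measurableSet_Ioc hsub).absolutelyContinuous
  simp_rw [eLpNorm_two_sq_prod hmeas, lintegral_csWeight, eLpNorm_two_sq]
  refine (lintegral_enorm_sub_sq_le (β := 2 * s) volume le_rfl hb (by positivity)
    (fun x t ht => (hv.differentiableAt_right x ht.1).hasDerivAt)
    (fun x => (hv.continuousOn_deriv x).mono hsub) hv₀ (hmeas.mono_ac (.prod .rfl hac))).trans ?_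
  exact mul_le_mul_right (lintegral_mono_set hsub) _

end Exhaustion

section ExtensionEnergy

variable {E : Type*} [NormedAddCommGroup E] [InnerProductSpace ℝ E] [FiniteDimensional ℝ E]
  [MeasurableSpace E] [BorelSpace E] {s y a b : ℝ}

theorem hasGradientAt_csExtension (u : 𝓢(E, ℝ)) (hs : 0 < s) (hy : 0 < y) (x : E) :
    HasGradientAt (csExtension s u · y)
      ((InnerProductSpace.toDual ℝ E).symm (csExtension s (fderiv ℝ u) x y)) x :=
  (hasFDerivAt_csExtension u hs hy x).hasGradientAt

theorem continuousOn_csExtension (f : 𝓢(E, ℝ)) (hs : 0 < s) (x : E) :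
    ContinuousOn (csExtension s f x) (Set.Ioi 0) := fun _ hy =>
  (hasDerivAt_csExtension hs hy f.integrable x).continuousAt.continuousWithinAt

theorem continuousOn_csFlux (f : 𝓢(E, ℝ)) (hs : 0 < s) (x : E) :
    ContinuousOn (csFlux s f x) (Set.Ioi 0) := fun _ hy =>
  (hasDerivAt_csFlux f hs hy x).continuousAt.continuousWithinAt

theorem sliceContDiff_csExtension (u : 𝓢(E, ℝ)) (hs : 0 < s) :
    SliceContDiff (csExtension s u) where
  differentiable_left _ hy x := (hasFDerivAt_csExtension u hs hy x).differentiableAt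
  contDiffOn_right x := by
    have h (y : ℝ) (hy : y ∈ Set.Ioi 0) := hasDerivAt_csExtension hs hy u.integrable x
    refine (contDiffOn_succ_iff_deriv_of_isOpen (n := 0) isOpen_Ioi).2
      ⟨fun y hy => (h y hy).differentiableAt.differentiableWithinAt, by simp,
        contDiffOn_zero.2 ?_⟩
    exact ((continuousOn_id.rpow_const fun y hy => .inl hy.ne').smul
      (continuousOn_csFlux u hs x)).congr fun y hy => (h y hy).deriv

theorem halfSpaceGradient_csExtension (u : 𝓢(E, ℝ)) (hs : 0 < s) {p : E × ℝ} (hp : 0 < p.2) :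
    halfSpaceGradient (csExtension s u) p =
      WithLp.toLp 2 ((InnerProductSpace.toDual ℝ E).symm (csExtension s (fderiv ℝ u) p.1 p.2),
        p.2 ^ (2 * s - 1) * csFlux s u p.1 p.2) := by
  rw [halfSpaceGradient, (hasGradientAt_csExtension u hs hp p.1).gradient,
    (hasDerivAt_csExtension hs hp u.integrable p.1).deriv, smul_eq_mul]

theorem ae_prod_csWeight_mem {S : Set ℝ} (hS : MeasurableSet S) :
    ∀ᵐ p ∂(volume : Measure E).prod (csWeight s S), p.2 ∈ S :=
  Measure.quasiMeasurePreserving_snd.ae (ae_csWeight_mem hS)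

theorem aestronglyMeasurable_halfSpaceGradient_csExtension (u : 𝓢(E, ℝ)) (hs : 0 < s) :
    AEStronglyMeasurable (halfSpaceGradient (csExtension s u))
      (volume.prod (csWeight s (Set.Ioi 0))) := by
  have hx := (InnerProductSpace.toDual ℝ E).symm.continuous.comp_stronglyMeasurable
    (stronglyMeasurable_csExtension (s := s)
      (SchwartzMap.fderivCLM ℝ E ℝ u).continuous.stronglyMeasurable)
  have hy : StronglyMeasurable fun p : E × ℝ => p.2 ^ (2 * s - 1) * csFlux s u p.1 p.2 :=
    (by fun_prop : Measurable fun p : E × ℝ => p.2 ^ (2 * s - 1)).stronglyMeasurable.mul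
      (stronglyMeasurable_csFlux u.continuous.stronglyMeasurable)
  refine ((WithLp.prod_continuous_toLp 2 E ℝ).comp_stronglyMeasurable
    (hx.prodMk hy)).aestronglyMeasurable.congr ?_
  filter_upwards [ae_prod_csWeight_mem measurableSet_Ioi] with p hp
  exact (halfSpaceGradient_csExtension u hs hp).symm

theorem setLIntegral_rpow_mul_min_lt_top (hs : 0 < s) :
    ∫⁻ y in Set.Ioi (0 : ℝ), ENNReal.ofReal (y ^ (2 * s - 1)) *
      (min 1 (ENNReal.ofReal (y ^ (-(2 * s))))) ^ 2 < ⊤ := by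
  rw [← Set.Ioc_union_Ioi_eq_Ioi zero_le_one]
  refine (lintegral_union_le _ _ _).trans_lt (ENNReal.add_lt_top.2 ⟨?_, ?_⟩)
  · calc _ ≤ ∫⁻ y in Set.Ioc (0 : ℝ) 1, ENNReal.ofReal (y ^ (2 * s - 1)) := by
          refine lintegral_mono fun y => mul_le_of_le_one_right' ?_
          exact pow_le_one' (min_le_left _ _) 2
      _ ≤ _ := lintegral_Ioc_rpow_sub_one_le le_rfl zero_le_one (by positivity)
      _ < ⊤ := ENNReal.ofReal_lt_top
  · calc _ ≤ ∫⁻ y in Set.Ioi (1 : ℝ), ENNReal.ofReal (y ^ (-(2 * s) - 1)) := by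
          refine setLIntegral_mono' measurableSet_Ioi fun y hy => ?_
          have hy₀ : 0 < y := one_pos.trans hy
          calc _ ≤ ENNReal.ofReal (y ^ (2 * s - 1)) * ENNReal.ofReal (y ^ (-(2 * s))) ^ 2 := by
                gcongr; exact min_le_right _ _
            _ = _ := by
                rw [← ENNReal.ofReal_pow (by positivity), ← ENNReal.ofReal_mul (by positivity),
                  ← Real.rpow_mul_natCast hy₀.le, ← Real.rpow_add hy₀]
                congr 2; push_cast; ring
      _ < ⊤ := (integrableOn_Ioi_rpow_of_lt (by linarith) one_pos).lintegral_lt_top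

theorem memLp_deriv_csExtension (hs : s ∈ Set.Ioo 0 1) (u : 𝓢(E, ℝ)) :
    MemLp (fun p : E × ℝ => deriv (csExtension s u p.1) p.2) 2
      (volume.prod (csWeight s (Set.Ioi 0))) := by
  have hmeas : AEStronglyMeasurable (fun p : E × ℝ => deriv (csExtension s u p.1) p.2)
      (volume.prod (csWeight s (Set.Ioi 0))) :=
    (WithLp.prod_continuous_ofLp 2 E ℝ).snd.comp_aestronglyMeasurable
      (aestronglyMeasurable_halfSpaceGradient_csExtension u hs.1)
  obtain ⟨C, hC⟩ := exists_eLpNorm_csFlux_le hs u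
  refine memLp_two_of_lintegral_ne_top hmeas ?_
  rw [← eLpNorm_two_sq, eLpNorm_two_sq_prod hmeas, lintegral_csWeight]
  refine ne_top_of_le_ne_top (ENNReal.mul_ne_top (ENNReal.pow_ne_top ENNReal.coe_ne_top)
    (setLIntegral_rpow_mul_min_lt_top hs.1).ne) ((setLIntegral_mono' measurableSet_Ioi
      fun y (hy : 0 < y) => ?_).trans_eq (lintegral_const_mul' (C ^ 2 : ℝ≥0∞) _ (by finiteness)))
  have hflux : eLpNorm (csFlux s u · y) 2 volume ≤ C * min 1 (ENNReal.ofReal (y ^ (-(2 * s)))) := by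
    rw [mul_min, mul_one]
    exact le_min (hC y hy).1 (hC y hy).2
  have hderiv : (fun x => deriv (csExtension s u x) y) = y ^ (2 * s - 1) • (csFlux s u · y) := by
    ext x
    exact (hasDerivAt_csExtension hs.1 hy u.integrable x).deriv
  calc ENNReal.ofReal (y ^ (1 - 2 * s)) *
        eLpNorm (fun x => deriv (csExtension s u x) y) 2 volume ^ 2
      = ENNReal.ofReal (y ^ (2 * s - 1)) * eLpNorm (csFlux s u · y) 2 volume ^ 2 := by
        rw [hderiv, eLpNorm_const_smul _ _ 2 volume, mul_pow, Real.enorm_of_nonneg (by positivity),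
          ← mul_assoc, ← ENNReal.ofReal_pow (by positivity), ← ENNReal.ofReal_mul (by positivity),
          ← Real.rpow_mul_natCast hy.le, ← Real.rpow_add hy]
        congr 3; push_cast; ring
    _ ≤ ENNReal.ofReal (y ^ (2 * s - 1)) *
          (C * (min 1 (ENNReal.ofReal (y ^ (-(2 * s)))))) ^ 2 := by gcongr
    _ = _ := by ring

theorem memLp_gradient_csExtension_Ioc (hs : s ∈ Set.Ioo 0 1) (u : 𝓢(E, ℝ)) (ha : 0 ≤ a) (b : ℝ) :
    MemLp (fun p : E × ℝ => ∇ (csExtension s u · p.2) p.1) 2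
      (volume.prod (csWeight s (Set.Ioc a b))) := by
  have := isFiniteMeasure_csWeight_Ioc hs.2 ha b
  have hsub : Set.Ioc a b ⊆ Set.Ioi 0 := Set.Ioc_subset_Ioi_self.trans (Set.Ioi_subset_Ioi ha)
  have hu : Continuous (fderiv ℝ u) := (u.smooth 1).continuous_fderiv one_ne_zero
  have hu₂ : MemLp (fderiv ℝ u) 2 volume := (SchwartzMap.fderivCLM ℝ E ℝ u).memLp 2 volume
  refine memLp_two_prod_of_bound (C := eLpNorm (fderiv ℝ u) 2 volume) ?_ hu₂.eLpNorm_ne_top ?_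
  · exact ((WithLp.prod_continuous_ofLp 2 E ℝ).fst.comp_aestronglyMeasurable
      (aestronglyMeasurable_halfSpaceGradient_csExtension u hs.1)).mono_measure
      (Measure.prod_mono le_rfl (csWeight_mono measurableSet_Ioc hsub))
  · filter_upwards [ae_csWeight_mem measurableSet_Ioc] with y hy
    refine (eLpNorm_congr_norm_ae (.of_forall fun x => ?_)).trans_le
      (eLpNorm_csExtension_le hs.1 (hsub hy) hu.stronglyMeasurable)
    rw [(hasGradientAt_csExtension u hs.1 (hsub hy) x).gradient, LinearIsometryEquiv.norm_map]

theorem memLp_csExtension_Ioc (hs : s ∈ Set.Ioo 0 1) (f : 𝓢(E, ℝ)) (ha : 0 ≤ a) (b : ℝ) :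
    MemLp (fun p : E × ℝ => csExtension s f p.1 p.2) 2
      (volume.prod (csWeight s (Set.Ioc a b))) := by
  have := isFiniteMeasure_csWeight_Ioc hs.2 ha b
  refine memLp_two_prod_of_bound
    (stronglyMeasurable_csExtension f.continuous.stronglyMeasurable).aestronglyMeasurable
    (f.memLp 2).eLpNorm_ne_top ?_
  filter_upwards [ae_csWeight_mem measurableSet_Ioc] with y hy
  exact eLpNorm_csExtension_le hs.1 (ha.trans_lt hy.1) f.continuous.stronglyMeasurable

theorem memLp_halfSpaceGradient_csExtension_Ioc (hs : s ∈ Set.Ioo 0 1) (u : 𝓢(E, ℝ)) (ha : 0 ≤ a)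
    (b : ℝ) :
    MemLp (halfSpaceGradient (csExtension s u)) 2 (volume.prod (csWeight s (Set.Ioc a b))) := by
  have hle : (volume : Measure E).prod (csWeight s (Set.Ioc a b)) ≤
      volume.prod (csWeight s (Set.Ioi 0)) :=
    Measure.prod_mono le_rfl (csWeight_mono measurableSet_Ioc
      (Set.Ioc_subset_Ioi_self.trans (Set.Ioi_subset_Ioi ha)))
  refine ((memLp_gradient_csExtension_Ioc hs u ha b).norm.add
    ((memLp_deriv_csExtension hs u).mono_measure hle).norm).mono
    ((aestronglyMeasurable_halfSpaceGradient_csExtension u hs.1).mono_measure hle)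
    (.of_forall fun p => ?_)
  exact (norm_halfSpaceGradient_le _ p).trans (le_abs_self _)

end ExtensionEnergy

section Green

variable {E : Type*} [NormedAddCommGroup E] [InnerProductSpace ℝ E] [FiniteDimensional ℝ E]
  [MeasurableSpace E] [BorelSpace E] {s y a b : ℝ}

theorem memLp_csExtension (hs : 0 < s) (hy : 0 < y) (f : 𝓢(E, ℝ)) :
    MemLp (csExtension s f · y) 2 volume :=
  have hf : StronglyMeasurable f := f.continuous.stronglyMeasurable
  have hmeas : StronglyMeasurable (csExtension s f · y) :=
    (stronglyMeasurable_csExtension hf).comp_measurable measurable_prodMk_right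
  ⟨hmeas.aestronglyMeasurable, (eLpNorm_csExtension_le hs hy hf).trans_lt (f.memLp 2 volume).2⟩

theorem hasLineDerivAt_csExtension (f : 𝓢(E, ℝ)) (hs : 0 < s) (hy : 0 < y) (x e : E) :
    HasLineDerivAt ℝ (csExtension s f · y) (csExtension s (∂_{e} f : 𝓢(E, ℝ)) x y) x e := by
  have hf : Integrable (fderiv ℝ f) := (SchwartzMap.fderivCLM ℝ E ℝ f).integrable
  have hint := integrable_csKernel_smul hf (csExponent_pos (E := E) hs).le hy x
  convert (hasFDerivAt_csExtension f hs hy x).hasLineDerivAt e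
  simp only [csExtension, csPotential, smul_apply]
  rw [ContinuousLinearMap.integral_apply hint]
  rfl

theorem csExtension_laplacian_eq_sum {ι : Type*} [Fintype ι] (e : OrthonormalBasis ι ℝ E)
    (f : 𝓢(E, ℝ)) (hs : 0 < s) (hy : 0 < y) (x : E) :
    csExtension s (Δ f : 𝓢(E, ℝ)) x y =
      ∑ i, csExtension s (∂_{e i} (∂_{e i} f) : 𝓢(E, ℝ)) x y := by
  simp only [csExtension, csPotential_laplacian_eq_sum e f (csExponent_pos hs).le hy,
    Finset.smul_sum]

theorem integral_inner_gradient_csExtension (hs : 0 < s) (hy : 0 < y) (u : 𝓢(E, ℝ)) {g : E → ℝ}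
    (hg : Differentiable ℝ g) (hg₂ : MemLp g 2) (hg' : MemLp (∇ g) 2) :
    ∫ x, ⟪∇ (csExtension s u · y) x, ∇ g x⟫_ℝ =
      -∫ x, csExtension s (Δ u : 𝓢(E, ℝ)) x y * g x := by
  let e := stdOrthonormalBasis ℝ E
  have hpart (i) : MemLp (fun x => fderiv ℝ g x (e i)) 2 := by
    simpa only [inner_gradient_left] using hg'.inner_const (𝕜 := ℝ) (e i)
  have hint (f : 𝓢(E, ℝ)) {h : E → ℝ} (hh : MemLp h 2) :
      Integrable fun x => csExtension s f x y * h x := (memLp_csExtension hs hy f).integrable_mul hh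
  have hinner (x : E) : ⟪∇ (csExtension s u · y) x, ∇ g x⟫_ℝ =
      ∑ i, csExtension s (∂_{e i} u : 𝓢(E, ℝ)) x y * fderiv ℝ g x (e i) := by
    rw [← e.sum_inner_mul_inner]
    refine Finset.sum_congr rfl fun i _ => congrArg₂ _ ?_ ?_
    · rw [inner_gradient_left, ← (hasLineDerivAt_csExtension u hs hy x (e i)).lineDeriv,
        (hasFDerivAt_csExtension u hs hy x).differentiableAt.lineDeriv_eq_fderiv]
    · simp
  have hparts (i) : ∫ x, csExtension s (∂_{e i} u : 𝓢(E, ℝ)) x y * fderiv ℝ g x (e i) =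
      -∫ x, csExtension s (∂_{e i} (∂_{e i} u) : 𝓢(E, ℝ)) x y * g x :=
    integral_bilinear_hasLineDerivAt_right_eq_neg_left_of_integrable
      (B := ContinuousLinearMap.mul ℝ ℝ) (hint _ hg₂) (hint _ (hpart i)) (hint _ hg₂)
      (fun x _ => hasLineDerivAt_csExtension _ hs hy x (e i))
      fun x _ => (hg x).hasFDerivAt.hasLineDerivAt (e i)
  simp_rw [hinner, csExtension_laplacian_eq_sum e u hs hy, Finset.sum_mul]
  rw [integral_finsetSum _ fun i _ => hint (∂_{e i} u) (hpart i),
    integral_finsetSum _ fun i _ => hint (∂_{e i} (∂_{e i} u)) hg₂, ← Finset.sum_neg_distrib]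
  exact Finset.sum_congr rfl fun i _ => hparts i

end Green

section FirstVariation

variable {E : Type*} [NormedAddCommGroup E] [InnerProductSpace ℝ E] [FiniteDimensional ℝ E]
  [MeasurableSpace E] [BorelSpace E] {s a b : ℝ}

theorem integral_csWeight_Ioc_deriv_csExtension (hs : 0 < s) (u : 𝓢(E, ℝ)) (ha : 0 < a)
    (hab : a ≤ b) (x : E) {φ : ℝ → ℝ} (hφ : ContDiffOn ℝ 1 φ (Set.Ioi 0)) :
    ∫ t, (deriv (csExtension s u x) t * deriv φ t - csExtension s (Δ u : 𝓢(E, ℝ)) x t * φ t)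
      ∂csWeight s (Set.Ioc a b) = csFlux s u x b * φ b - csFlux s u x a * φ a := by
  have hsub : Set.Icc a b ⊆ Set.Ioi 0 := fun t ht => ha.trans_le ht.1
  have hflux (t : ℝ) (ht : 0 < t) : HasDerivAt (fun t => csFlux s u x t * φ t)
      (t ^ (1 - 2 * s) • (deriv (csExtension s u x) t * deriv φ t -
        csExtension s (Δ u : 𝓢(E, ℝ)) x t * φ t)) t := by
    have hφt := ((hφ.differentiableOn one_ne_zero).differentiableAt (Ioi_mem_nhds ht)).hasDerivAt
    refine ((hasDerivAt_csFlux u hs ht x).mul hφt).congr_deriv ?_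
    have hpow : t ^ (1 - 2 * s) * t ^ (2 * s - 1) = 1 := by
      rw [← Real.rpow_add ht, sub_add_sub_cancel', sub_self, Real.rpow_zero]
    rw [(hasDerivAt_csExtension hs ht u.integrable x).deriv]
    simp only [smul_eq_mul]
    linear_combination (-(csFlux s u x t * deriv φ t)) * hpow
  have hcont : ContinuousOn (fun t => t ^ (1 - 2 * s) • (deriv (csExtension s u x) t * deriv φ t -
      csExtension s (Δ u : 𝓢(E, ℝ)) x t * φ t)) (Set.Ioi 0) :=
    (continuousOn_id.rpow_const fun t ht => .inl (ne_of_gt ht)).smul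
      ((((sliceContDiff_csExtension u hs).continuousOn_deriv x).mul
        (hφ.continuousOn_deriv_of_isOpen isOpen_Ioi le_rfl)).sub
        ((continuousOn_csExtension (Δ u) hs x).mul hφ.continuousOn))
  rw [integral_csWeight measurableSet_Ioc (Set.Ioc_subset_Icc_self.trans hsub),
    ← intervalIntegral.integral_of_le hab]
  rw [← Set.uIcc_of_le hab] at hsub
  exact intervalIntegral.integral_eq_sub_of_hasDerivAt (fun t ht => hflux t (hsub ht))
    (hcont.mono hsub).intervalIntegrable

theorem integral_prod_inner_gradient_csExtension (hs : s ∈ Set.Ioo 0 1) (u : 𝓢(E, ℝ))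
    (ha : 0 ≤ a) {φ : E → ℝ → ℝ} (hφ : ∀ ⦃y⦄, 0 < y → Differentiable ℝ (φ · y))
    (hφ₂ : MemLp (fun p : E × ℝ => φ p.1 p.2) 2 (volume.prod (csWeight s (Set.Ioc a b))))
    (hφ' : MemLp (fun p : E × ℝ => ∇ (φ · p.2) p.1) 2 (volume.prod (csWeight s (Set.Ioc a b)))) :
    ∫ p, ⟪∇ (csExtension s u · p.2) p.1, ∇ (φ · p.2) p.1⟫_ℝ
      ∂volume.prod (csWeight s (Set.Ioc a b)) =
        -∫ p, csExtension s (Δ u : 𝓢(E, ℝ)) p.1 p.2 * φ p.1 p.2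
          ∂(volume : Measure E).prod (csWeight s (Set.Ioc a b)) := by
  rw [integral_prod_symm _ (integrable_inner_of_memLp_two
      (memLp_gradient_csExtension_Ioc hs u ha b) hφ'),
    integral_prod_symm (fun p : E × ℝ => csExtension s (Δ u : 𝓢(E, ℝ)) p.1 p.2 * φ p.1 p.2)
      ((memLp_csExtension_Ioc hs (Δ u) ha b).integrable_mul hφ₂), ← integral_neg]
  refine integral_congr_ae ?_
  filter_upwards [ae_csWeight_mem measurableSet_Ioc, ae_memLp_two_of_prod hφ₂,
    ae_memLp_two_of_prod hφ'] with y hy h h'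
  have hy₀ : 0 < y := ha.trans_lt hy.1
  exact integral_inner_gradient_csExtension hs.1 hy₀ u (hφ hy₀) h h'

theorem integral_inner_halfSpaceGradient_csExtension (hs : s ∈ Set.Ioo 0 1) (u : 𝓢(E, ℝ))
    (ha : 0 < a) (hab : a ≤ b) {φ : E → ℝ → ℝ} (hφ : SliceContDiff φ)
    (hφ₂ : MemLp (fun p : E × ℝ => φ p.1 p.2) 2 (volume.prod (csWeight s (Set.Ioc a b))))
    (hφ' : MemLp (halfSpaceGradient φ) 2 (volume.prod (csWeight s (Set.Ioc a b)))) :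
    ∫ p, ⟪halfSpaceGradient (csExtension s u) p, halfSpaceGradient φ p⟫_ℝ
      ∂volume.prod (csWeight s (Set.Ioc a b)) =
        ∫ x, (csFlux s u x b * φ x b - csFlux s u x a * φ x a) := by
  have hsub : Set.Ioc a b ⊆ Set.Ioi 0 := Set.Ioc_subset_Ioi_self.trans (Set.Ioi_subset_Ioi ha.le)
  have hφx : MemLp (fun p : E × ℝ => ∇ (φ · p.2) p.1) 2 (volume.prod (csWeight s (Set.Ioc a b))) :=
    (WithLp.fstL 2 ℝ E ℝ).comp_memLp' hφ'
  have hφy : MemLp (fun p : E × ℝ => deriv (φ p.1) p.2) 2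
      (volume.prod (csWeight s (Set.Ioc a b))) :=
    (WithLp.sndL 2 ℝ E ℝ).comp_memLp' hφ'
  have hx := integrable_inner_of_memLp_two (memLp_gradient_csExtension_Ioc hs u ha.le b) hφx
  have hy : Integrable (fun p : E × ℝ => deriv (csExtension s u p.1) p.2 * deriv (φ p.1) p.2)
      (volume.prod (csWeight s (Set.Ioc a b))) :=
    ((memLp_deriv_csExtension hs u).mono_measure
      (Measure.prod_mono le_rfl (csWeight_mono measurableSet_Ioc hsub))).integrable_mul hφy
  have hΔ : Integrable (fun p : E × ℝ => csExtension s (Δ u : 𝓢(E, ℝ)) p.1 p.2 * φ p.1 p.2)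
      (volume.prod (csWeight s (Set.Ioc a b))) :=
    (memLp_csExtension_Ioc hs (Δ u) ha.le b).integrable_mul hφ₂
  simp_rw [inner_halfSpaceGradient]
  rw [integral_add hx hy,
    integral_prod_inner_gradient_csExtension hs u ha.le hφ.differentiable_left hφ₂ hφx,
    neg_add_eq_sub, ← integral_sub hy hΔ]
  exact (integral_prod _ (hy.sub hΔ)).trans (integral_congr_ae (.of_forall fun x =>
    integral_csWeight_Ioc_deriv_csExtension hs.1 u ha hab x (hφ.contDiffOn_right x)))

end FirstVariation

section Boundary

variable {E : Type*} [NormedAddCommGroup E] [InnerProductSpace ℝ E] [FiniteDimensional ℝ E]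
  [MeasurableSpace E] [BorelSpace E] {s a b : ℝ} {v φ : E → ℝ → ℝ}

theorem exists_eLpNorm_le_rpow (hs : 0 < s) (hφ : SliceContDiff φ)
    (hφ₀ : ∀ x, Tendsto (φ x) (𝓝[>] 0) (𝓝 0))
    (hφ' : MemLp (fun p : E × ℝ => deriv (φ p.1) p.2) 2 (volume.prod (csWeight s (Set.Ioi 0)))) :
    ∃ C : ℝ≥0, ∀ y, 0 < y → eLpNorm (φ · y) 2 volume ≤ C * ENNReal.ofReal (y ^ s) := by
  set D := eLpNorm (fun p : E × ℝ => deriv (φ p.1) p.2) 2 (volume.prod (csWeight s (Set.Ioi 0)))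
  have hC : ENNReal.ofReal √(2 * s)⁻¹ * D ≠ ⊤ :=
    ENNReal.mul_ne_top ENNReal.ofReal_ne_top hφ'.eLpNorm_ne_top
  refine ⟨(ENNReal.ofReal √(2 * s)⁻¹ * D).toNNReal, fun y hy => ?_⟩
  rw [ENNReal.coe_toNNReal hC, ← ENNReal.pow_le_pow_left_iff two_ne_zero]
  have h := eLpNorm_sub_trace_sq_le hs hφ hφ₀ hφ'.1 hy
  simp only [sub_zero] at h
  refine h.trans_eq ?_
  rw [mul_right_comm, ← ENNReal.ofReal_mul (by positivity), mul_pow,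
    ← ENNReal.ofReal_pow (by positivity), mul_pow, Real.sq_sqrt (by positivity),
    ← Real.rpow_mul_natCast hy.le]
  congr 2
  push_cast
  ring_nf

theorem tendsto_const_mul_ofReal_zero {α : Type*} {l : Filter α} {g : α → ℝ}
    (hg : Tendsto g l (𝓝 0)) {C : ℝ≥0∞} (hC : C ≠ ⊤) :
    Tendsto (fun y => C * ENNReal.ofReal (g y)) l (𝓝 0) := by
  simpa using ENNReal.Tendsto.const_mul (ENNReal.tendsto_ofReal hg) (.inr hC)

theorem tendsto_eLpNorm_csFlux_mul_nhdsGT (hs : s ∈ Set.Ioo 0 1) (u : 𝓢(E, ℝ)) {C : ℝ≥0}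
    (hφ : ∀ y, 0 < y → eLpNorm (φ · y) 2 volume ≤ C * ENNReal.ofReal (y ^ s)) :
    Tendsto (fun y => 2 * (eLpNorm (csFlux s u · y) 2 volume * eLpNorm (φ · y) 2 volume))
      (𝓝[>] 0) (𝓝 0) := by
  obtain ⟨C', hC'⟩ := exists_eLpNorm_csFlux_le hs u
  have hrpow : Tendsto (fun y : ℝ => y ^ s) (𝓝[>] 0) (𝓝 0) := by
    simpa only [Real.zero_rpow hs.1.ne'] using
      (Real.continuousAt_rpow_const 0 s (.inr hs.1.le)).tendsto.mono_left nhdsWithin_le_nhds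
  refine tendsto_of_tendsto_of_tendsto_of_le_of_le' tendsto_const_nhds
    (tendsto_const_mul_ofReal_zero hrpow (C := 2 * C' * C) (by finiteness))
    (.of_forall fun _ => zero_le) ?_
  filter_upwards [self_mem_nhdsWithin] with y hy
  calc 2 * (eLpNorm (csFlux s u · y) 2 volume * eLpNorm (φ · y) 2 volume)
      ≤ 2 * (C' * (C * ENNReal.ofReal (y ^ s))) := by
        gcongr
        exacts [(hC' y hy).1, hφ y hy]
    _ = 2 * C' * C * ENNReal.ofReal (y ^ s) := by ring

theorem tendsto_eLpNorm_csFlux_mul_atTop (hs : s ∈ Set.Ioo 0 1) (u : 𝓢(E, ℝ)) {C : ℝ≥0}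
    (hφ : ∀ y, 0 < y → eLpNorm (φ · y) 2 volume ≤ C * ENNReal.ofReal (y ^ s)) :
    Tendsto (fun y => 2 * (eLpNorm (csFlux s u · y) 2 volume * eLpNorm (φ · y) 2 volume))
      atTop (𝓝 0) := by
  obtain ⟨C', hC'⟩ := exists_eLpNorm_csFlux_le hs u
  refine tendsto_of_tendsto_of_tendsto_of_le_of_le' tendsto_const_nhds
    (tendsto_const_mul_ofReal_zero (tendsto_rpow_neg_atTop hs.1) (C := 2 * C' * C)
      (by finiteness)) (.of_forall fun _ => zero_le) ?_
  filter_upwards [eventually_gt_atTop 0] with y hy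
  calc 2 * (eLpNorm (csFlux s u · y) 2 volume * eLpNorm (φ · y) 2 volume)
      ≤ 2 * (C' * ENNReal.ofReal (y ^ (-(2 * s))) * (C * ENNReal.ofReal (y ^ s))) := by
        gcongr
        exacts [(hC' y hy).2, hφ y hy]
    _ = 2 * C' * C * ENNReal.ofReal (y ^ (-(2 * s)) * y ^ s) := by
        rw [ENNReal.ofReal_mul (by positivity)]
        ring
    _ = 2 * C' * C * ENNReal.ofReal (y ^ (-s)) := by
        rw [← Real.rpow_add hy]
        ring_nf

theorem enorm_integral_csFlux_mul_sub_le (u : 𝓢(E, ℝ)) (ha : AEStronglyMeasurable (φ · a))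
    (hb : AEStronglyMeasurable (φ · b)) :
    ‖∫ x, (csFlux s u x b * φ x b - csFlux s u x a * φ x a)‖ₑ ≤
      eLpNorm (csFlux s u · a) 2 volume * eLpNorm (φ · a) 2 volume +
        eLpNorm (csFlux s u · b) 2 volume * eLpNorm (φ · b) 2 volume := by
  have hflux (y : ℝ) : AEStronglyMeasurable (csFlux s u · y) :=
    ((stronglyMeasurable_csFlux u.continuous.stronglyMeasurable).comp_measurable
      measurable_prodMk_right).aestronglyMeasurable
  calc ‖∫ x, (csFlux s u x b * φ x b - csFlux s u x a * φ x a)‖ₑ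
      ≤ ∫⁻ x, ‖csFlux s u x b * φ x b - csFlux s u x a * φ x a‖ₑ :=
        enorm_integral_le_lintegral_enorm _
    _ ≤ ∫⁻ x, (‖csFlux s u x a * φ x a‖ₑ + ‖csFlux s u x b * φ x b‖ₑ) :=
        lintegral_mono fun x => enorm_sub_le.trans_eq (add_comm _ _)
    _ = (∫⁻ x, ‖csFlux s u x a * φ x a‖ₑ) + ∫⁻ x, ‖csFlux s u x b * φ x b‖ₑ :=
        lintegral_add_left' ((hflux a).mul ha).enorm _
    _ ≤ _ := add_le_add (lintegral_enorm_mul_le (hflux a) ha) (lintegral_enorm_mul_le (hflux b) hb)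

end Boundary

section Minimality

variable {E : Type*} [NormedAddCommGroup E] [InnerProductSpace ℝ E] [FiniteDimensional ℝ E]
  [MeasurableSpace E] [BorelSpace E] {s a b : ℝ} {v : E → ℝ → ℝ}

theorem memLp_halfSpaceGradient_of_csEnergy_ne_top
    (hv : ContDiffOn ℝ 1 (fun p : E × ℝ => v p.1 p.2) {p | 0 < p.2}) (h : csEnergy s v ≠ ⊤) :
    MemLp (halfSpaceGradient v) 2 (volume.prod (csWeight s (Set.Ioi 0))) := by
  have hmeas : AEStronglyMeasurable (halfSpaceGradient v)
      (volume.prod (csWeight s (Set.Ioi 0))) :=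
    aestronglyMeasurable_prod_csWeight (continuousOn_halfSpaceGradient hv) measurableSet_Ioi le_rfl
  exact memLp_two_of_lintegral_ne_top hmeas (csEnergy_eq_lintegral_prod hmeas ▸ h)

theorem lintegral_halfSpaceGradient_csExtension_le_Ioc (hs : s ∈ Set.Ioo 0 1) (u : 𝓢(E, ℝ))
    (ha : 0 < a) (hab : a ≤ b) (hv : SliceContDiff v)
    (hvu : MemLp (fun p : E × ℝ => v p.1 p.2 - csExtension s u p.1 p.2) 2
      (volume.prod (csWeight s (Set.Ioc a b))))
    (hv' : MemLp (halfSpaceGradient v) 2 (volume.prod (csWeight s (Set.Ioc a b)))) :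
    ∫⁻ p, ‖halfSpaceGradient (csExtension s u) p‖ₑ ^ 2 ∂volume.prod (csWeight s (Set.Ioc a b)) ≤
      ∫⁻ p, ‖halfSpaceGradient v p‖ₑ ^ 2 ∂volume.prod (csWeight s (Set.Ioc a b)) +
        2 * ‖∫ x, (csFlux s u x b * (v x b - csExtension s u x b) -
          csFlux s u x a * (v x a - csExtension s u x a))‖ₑ := by
  have hu' := memLp_halfSpaceGradient_csExtension_Ioc hs u ha.le b
  have hu := sliceContDiff_csExtension u hs.1
  have hsub : halfSpaceGradient (fun x y => v x y - csExtension s u x y)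
      =ᵐ[volume.prod (csWeight s (Set.Ioc a b))]
        halfSpaceGradient v - halfSpaceGradient (csExtension s u) := by
    filter_upwards [ae_prod_csWeight_mem measurableSet_Ioc] with p hp
    exact hv.halfSpaceGradient_sub hu (ha.trans hp.1)
  have hvar := integral_inner_halfSpaceGradient_csExtension hs u ha hab (hv.sub hu) hvu
    ((hv'.sub hu').ae_eq hsub.symm)
  rw [← hvar, integral_congr_ae (hsub.mono fun p hp => congrArg (inner ℝ _) hp)]
  exact lintegral_enorm_sq_le_add_inner_sub hu' hv'

theorem memLp_two_Ioc_of_eLpNorm_le_rpow (hs : s ∈ Set.Ioo 0 1) {φ : E → ℝ → ℝ}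
    (hφ : AEStronglyMeasurable (fun p : E × ℝ => φ p.1 p.2)
      (volume.prod (csWeight s (Set.Ioc a b)))) (ha : 0 ≤ a) {C : ℝ≥0}
    (hC : ∀ y, 0 < y → eLpNorm (φ · y) 2 volume ≤ C * ENNReal.ofReal (y ^ s)) :
    MemLp (fun p : E × ℝ => φ p.1 p.2) 2 (volume.prod (csWeight s (Set.Ioc a b))) := by
  have := isFiniteMeasure_csWeight_Ioc hs.2 ha b
  refine memLp_two_prod_of_bound (C := C * ENNReal.ofReal (b ^ s)) hφ (by finiteness) ?_
  filter_upwards [ae_csWeight_mem measurableSet_Ioc] with y hy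
  have hy₀ : 0 < y := ha.trans_lt hy.1
  refine (hC y hy₀).trans ?_
  gcongr
  exacts [hs.1.le, hy.2]

theorem exists_eLpNorm_sub_csExtension_le_rpow (hs : s ∈ Set.Ioo 0 1) (u : 𝓢(E, ℝ))
    (hv : SliceContDiff v) (hv₀ : ∀ x, Tendsto (v x) (𝓝[>] 0) (𝓝 (u x)))
    (hv' : MemLp (halfSpaceGradient v) 2 (volume.prod (csWeight s (Set.Ioi 0)))) :
    ∃ C : ℝ≥0, ∀ y, 0 < y →
      eLpNorm (fun x => v x y - csExtension s u x y) 2 volume ≤ C * ENNReal.ofReal (y ^ s) := by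
  have hu := sliceContDiff_csExtension u hs.1
  refine exists_eLpNorm_le_rpow hs.1 (hv.sub hu)
    (fun x => by simpa using (hv₀ x).sub (tendsto_csExtension u hs.1 x)) ?_
  have hvy : MemLp (fun p : E × ℝ => deriv (v p.1) p.2) 2
      (volume.prod (csWeight s (Set.Ioi 0))) := (WithLp.sndL 2 ℝ E ℝ).comp_memLp' hv'
  refine (hvy.sub (memLp_deriv_csExtension hs u)).ae_eq ?_
  filter_upwards [ae_prod_csWeight_mem measurableSet_Ioi] with p hp
  exact (deriv_fun_sub (hv.differentiableAt_right _ hp) (hu.differentiableAt_right _ hp)).symm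

theorem stmt15_general (hs : s ∈ Set.Ioo 0 1) (u : 𝓢(E, ℝ))
    (hv : ContDiffOn ℝ 1 (fun p : E × ℝ => v p.1 p.2) {p | 0 < p.2})
    (hv₀ : ∀ x, Tendsto (v x) (𝓝[>] 0) (𝓝 (u x))) :
    csEnergy s (csExtension s u) ≤ csEnergy s v := by
  obtain htop | hfin := eq_or_ne (csEnergy s v) ⊤
  · exact le_top.trans_eq htop.symm
  have hslice := sliceContDiff_of_contDiffOn hv
  have hdiff := hslice.sub (sliceContDiff_csExtension u hs.1)
  have hv' := memLp_halfSpaceGradient_of_csEnergy_ne_top hv hfin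
  obtain ⟨C, hC⟩ := exists_eLpNorm_sub_csExtension_le_rpow hs u hslice hv₀ hv'
  refine csEnergy_le_of_forall_Ioc (aestronglyMeasurable_halfSpaceGradient_csExtension u hs.1)
    (tendsto_eLpNorm_csFlux_mul_nhdsGT hs u hC) (tendsto_eLpNorm_csFlux_mul_atTop hs u hC)
    fun a b ha hab => ?_
  have hsub : Set.Ioc a b ⊆ Set.Ioi 0 := Set.Ioc_subset_Ioi_self.trans (Set.Ioi_subset_Ioi ha.le)
  have hle : (volume : Measure E).prod (csWeight s (Set.Ioc a b)) ≤
      volume.prod (csWeight s (Set.Ioi 0)) :=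
    Measure.prod_mono le_rfl (csWeight_mono measurableSet_Ioc hsub)
  have hmeas : AEStronglyMeasurable (fun p : E × ℝ => v p.1 p.2 - csExtension s u p.1 p.2)
      (volume.prod (csWeight s (Set.Ioc a b))) :=
    (aestronglyMeasurable_prod_csWeight hv.continuousOn measurableSet_Ioc hsub).sub
      (stronglyMeasurable_csExtension u.continuous.stronglyMeasurable).aestronglyMeasurable
  have hcont {y : ℝ} (hy : 0 < y) :
      AEStronglyMeasurable fun x => v x y - csExtension s u x y :=
    (hdiff.differentiable_left hy).continuous.aestronglyMeasurable
  refine (lintegral_halfSpaceGradient_csExtension_le_Ioc hs u ha hab.le hslice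
    (memLp_two_Ioc_of_eLpNorm_le_rpow hs hmeas ha.le hC) (hv'.mono_measure hle)).trans ?_
  rw [csEnergy_eq_lintegral_prod hv'.1, ← mul_add]
  gcongr
  exact enorm_integral_csFlux_mul_sub_le (φ := fun x y => v x y - csExtension s u x y) u
    (hcont ha) (hcont (ha.trans hab))

end Minimality

theorem tendsto_nhdsGT_of_continuousOn {X Y : Type*} [TopologicalSpace X] [TopologicalSpace Y]
    {v : X → ℝ → Y} (hv : ContinuousOn (fun p : X × ℝ => v p.1 p.2) {p | 0 ≤ p.2}) (x : X) :
    Tendsto (v x) (𝓝[>] 0) (𝓝 (v x 0)) :=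
  (hv (x, 0) (le_refl (0 : ℝ))).comp (f := (x, ·)) (by fun_prop)
    fun _ hy => (Set.mem_Ioi.1 hy).le

/-- The normalized Caffarelli–Silvestre extension minimizes the weighted Dirichlet energy
`ℰ_s(v) = ∫₀^∞ ∫ y^{1-2s}|∇v|² dx dy` among all `C¹` extensions of `u` to the half-space
that are continuous up to `y = 0` with trace `u` and have finite energy. Here
`|∇v|² = ‖∇ₓv‖² + (∂_y v)²` is the square of the full gradient in `(x,y)`. -/
theorem stmt15 {n : ℕ} (hn : 1 ≤ n) (s : ℝ) (hs : s ∈ Set.Ioo (0 : ℝ) 1)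
    (u : SchwartzMap (EuclideanSpace ℝ (Fin n)) ℝ)
    (w : EuclideanSpace ℝ (Fin n) → ℝ → ℝ)
    (hw : ∀ (x : EuclideanSpace ℝ (Fin n)) (y : ℝ),
      w x y = (1 / ∫ z : EuclideanSpace ℝ (Fin n), (‖z‖ ^ 2 + 1) ^ (-((n : ℝ) + 2 * s) / 2)) *
        ∫ ξ : EuclideanSpace ℝ (Fin n),
          y ^ (2 * s) * u ξ * (‖x - ξ‖ ^ 2 + y ^ 2) ^ (-((n : ℝ) + 2 * s) / 2))
    (v : EuclideanSpace ℝ (Fin n) → ℝ → ℝ)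
    (hv₁ : ContDiffOn ℝ 1 (fun p : EuclideanSpace ℝ (Fin n) × ℝ => v p.1 p.2)
      {p : EuclideanSpace ℝ (Fin n) × ℝ | 0 < p.2})
    (hv₂ : ContinuousOn (fun p : EuclideanSpace ℝ (Fin n) × ℝ => v p.1 p.2)
      {p : EuclideanSpace ℝ (Fin n) × ℝ | 0 ≤ p.2})
    (hv₃ : ∀ x : EuclideanSpace ℝ (Fin n), v x 0 = u x)
    (hfin : (∫⁻ y in Set.Ioi (0 : ℝ), ∫⁻ x : EuclideanSpace ℝ (Fin n),
        ENNReal.ofReal (y ^ (1 - 2 * s) *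
          (‖fderiv ℝ (fun x' => v x' y) x‖ ^ 2 + (deriv (fun t => v x t) y) ^ 2))) ≠ ⊤) :
    (∫⁻ y in Set.Ioi (0 : ℝ), ∫⁻ x : EuclideanSpace ℝ (Fin n),
        ENNReal.ofReal (y ^ (1 - 2 * s) *
          (‖fderiv ℝ (fun x' => w x' y) x‖ ^ 2 + (deriv (fun t => w x t) y) ^ 2)))
      ≤
    ∫⁻ y in Set.Ioi (0 : ℝ), ∫⁻ x : EuclideanSpace ℝ (Fin n),
        ENNReal.ofReal (y ^ (1 - 2 * s) *
          (‖fderiv ℝ (fun x' => v x' y) x‖ ^ 2 + (deriv (fun t => v x t) y) ^ 2)) := by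
  obtain rfl : w = csExtension s u := by
    funext x y
    rw [hw, csExtension_eq, finrank_euclideanSpace_fin]
  exact stmt15_general hs u hv₁ fun x => hv₃ x ▸ tendsto_nhdsGT_of_continuousOn hv₂ x
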